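/- arXiv:2310.15822 — 4 statements merged into one kernel-verified Lean document; each statement's English description precedes it below -/
import Mathlib

section
/- Let A be a commutative ring, d ≥ 1, and let M ∈ M_{2d}(A) satisfy M^j = M (where M^j := J·M^⊤·J^{−1}) and be such that the matrix M·J is alternating, i.e. (MJ)^⊤ = −MJ and MJ has zero diagonal (this is automatic when 2 is a nonzerodivisor in A). Then the Pfaffian characteristic polynomial Pf_M(λ) := Pf((λ·I_{2d} − M)·J) ∈ A[λ], which is monic of degree d, annihilates M: Pf_M(M) = 0 in M_{2d}(A). -/
/-!
STATEMENT 0: Let `A` be a commutative ring, `d ≥ 1`, and `M ∈ M_{2d}(A)` with `M^j = M`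
(where `M^j = J Mᵀ J⁻¹`, `J⁻¹ = -J`) and such that `M·J` is alternating. Then the Pfaffian
characteristic polynomial `Pf_M(λ) = Pf((λ·I - M)·J) ∈ A[λ]` is monic of degree `d` and
annihilates `M`: `Pf_M(M) = 0`.
-/

open scoped TensorProduct
open Matrix

universe u

namespace SympDet

/-- The standard symplectic matrix `J = [[0, I_d], [-I_d, 0]]`. -/
def Jmat (d : ℕ) (R : Type*) [CommRing R] : Matrix (Fin (2 * d)) (Fin (2 * d)) R :=
  Matrix.of fun k l =>
    if (k : ℕ) + d = (l : ℕ) then 1 else if (l : ℕ) + d = (k : ℕ) then -1 else 0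

/-- The symplectic standard involution `M ↦ J Mᵀ J⁻¹` (note `J⁻¹ = -J`). -/
def sympTr {d : ℕ} {R : Type*} [CommRing R] (M : Matrix (Fin (2 * d)) (Fin (2 * d)) R) :
    Matrix (Fin (2 * d)) (Fin (2 * d)) R :=
  Jmat d R * Mᵀ * (-(Jmat d R))

/-- Auxiliary indexing for the Pfaffian: `i ↦ 2i`. -/
def fpair0 {d : ℕ} (i : Fin d) : Fin (2 * d) := ⟨2 * (i : ℕ), by have := i.isLt; omega⟩

/-- Auxiliary indexing for the Pfaffian: `i ↦ 2i + 1`. -/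
def fpair1 {d : ℕ} (i : Fin d) : Fin (2 * d) := ⟨2 * (i : ℕ) + 1, by have := i.isLt; omega⟩

/-- The combinatorial (integer coefficient) Pfaffian of a `2d × 2d` matrix: the sum over
perfect matchings of signed products of entries. -/
def pfAux {d : ℕ} {R : Type*} [CommRing R] (M : Matrix (Fin (2 * d)) (Fin (2 * d)) R) : R :=
  ∑ σ : Equiv.Perm (Fin (2 * d)),
    if (∀ i : Fin d, σ (fpair0 i) < σ (fpair1 i)) ∧
        (∀ i j : Fin d, i < j → σ (fpair0 i) < σ (fpair0 j)) then
      ((Equiv.Perm.sign σ : ℤ) : R) * ∏ i : Fin d, M (σ (fpair0 i)) (σ (fpair1 i))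
    else 0

/-- The Pfaffian, normalized so that `Pf (J) = 1`. -/
def Pf {d : ℕ} {R : Type*} [CommRing R] (M : Matrix (Fin (2 * d)) (Fin (2 * d)) R) : R :=
  ((pfAux (Jmat d ℤ) : ℤ) : R) * pfAux M

/-- The Pfaffian characteristic polynomial `Pf_M(λ) = Pf((λ·I_{2d} − M)·J) ∈ A[λ]`. -/
noncomputable def pfCharpoly {d : ℕ} {A : Type u} [CommRing A]
    (M : Matrix (Fin (2 * d)) (Fin (2 * d)) A) : Polynomial A :=
  Pf (((Polynomial.X : Polynomial A) • (1 : Matrix (Fin (2 * d)) (Fin (2 * d)) (Polynomial A)) -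
      M.map Polynomial.C) * Jmat d (Polynomial A))

end SympDet

namespace SympDet

open Equiv Finset

/-- Signed term of the big Pfaffian sum. -/
def pterm {K R : Type*} [Fintype K] [DecidableEq K] [CommRing R]
    (N : Matrix (K × Bool) (K × Bool) R) (σ : Perm (K × Bool)) : R :=
  ((Perm.sign σ : ℤ) : R) * ∏ i : K, N (σ (i, false)) (σ (i, true))

/-- Elements of the hyperoctahedral group. -/
def hyp {K : Type*} (x : (K → Perm Bool) × Perm K) : Perm (K × Bool) :=
  Equiv.prodCongrRight x.1 * Equiv.prodCongrLeft (fun _ => x.2)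

lemma hyp_apply {K : Type*} (x : (K → Perm Bool) × Perm K) (i : K) (b : Bool) :
    hyp x (i, b) = (x.2 i, x.1 (x.2 i) b) := rfl

lemma permBool_cases (e : Perm Bool) : e = 1 ∨ e = swap false true := by
  revert e; decide

lemma pterm_hyp {K R : Type*} [Fintype K] [DecidableEq K] [CommRing R]
    (N : Matrix (K × Bool) (K × Bool) R) (hN : ∀ a b, N a b = - N b a)
    (σ : Perm (K × Bool)) (x : (K → Perm Bool) × Perm K) :
    pterm N (σ * hyp x) = pterm N σ := by
  obtain ⟨e, π⟩ := x
  have hs : Perm.sign (hyp (e, π)) = ∏ k, Perm.sign (e k) := by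
    rw [hyp, Perm.sign_mul, Perm.sign_prodCongrRight, Perm.sign_prodCongrLeft]
    simp
  have h1 : ∀ i, N (σ (i, e i false)) (σ (i, e i true)) =
      ((Perm.sign (e i) : ℤ) : R) * N (σ (i, false)) (σ (i, true)) := by
    intro i
    rcases permBool_cases (e i) with h | h
    · simp [h]
    · rw [h, hN]; simp
  have h2 : ∏ i, N ((σ * hyp (e, π)) (i, false)) ((σ * hyp (e, π)) (i, true)) =
      ∏ i, N (σ (i, e i false)) (σ (i, e i true)) := by
    simp only [Perm.mul_apply, hyp_apply]
    exact Equiv.prod_comp π (fun i => N (σ (i, e i false)) (σ (i, e i true)))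
  have h3 : (((∏ k, Perm.sign (e k) : ℤˣ) : ℤ) : R) * ((∏ k, Perm.sign (e k) : ℤˣ) : ℤ) = 1 := by
    rw [← Int.cast_mul, ← Units.val_mul, Int.units_mul_self]; simp
  unfold pterm
  rw [h2, Perm.sign_mul, hs]
  simp_rw [h1]
  rw [Finset.prod_mul_distrib]
  have h4 : ∏ i, ((Perm.sign (e i) : ℤ) : R) = (((∏ k, Perm.sign (e k) : ℤˣ) : ℤ) : R) := by
    push_cast; rfl
  rw [h4]
  push_cast [Units.val_mul] at *
  linear_combination ((Perm.sign σ : ℤ) : R) * (∏ i, N (σ (i, false)) (σ (i, true))) * h3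

/-- Normalised permutations. -/
def good {d : ℕ} {L : Type*} [LinearOrder L] (r : Fin d × Bool → L)
    (σ : Perm (Fin d × Bool)) : Prop :=
  (∀ i, r (σ (i, false)) < r (σ (i, true))) ∧
    ∀ i j, i < j → r (σ (i, false)) < r (σ (j, false))

lemma existsUnique_good {d : ℕ} {L : Type*} [LinearOrder L] (r : Fin d × Bool → L)
    (hr : Function.Injective r) (σ : Perm (Fin d × Bool)) :
    ∃! x : (Fin d → Perm Bool) × Perm (Fin d), good r (σ * hyp x) := by
  have hc : ∀ i, ∃! e : Perm Bool, r (σ (i, e false)) < r (σ (i, e true)) := by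
    intro i
    have hne : r (σ (i, false)) ≠ r (σ (i, true)) := by
      intro h; simpa using σ.injective (hr h)
    rcases lt_or_gt_of_ne hne with h | h
    · refine ⟨1, by simpa using h, ?_⟩
      intro e he
      rcases permBool_cases e with h' | h'
      · exact h'
      · subst h'; simp at he; exact absurd he (not_lt_of_gt h)
    · refine ⟨swap false true, by simpa using h, ?_⟩
      intro e he
      rcases permBool_cases e with h' | h'
      · subst h'; simp at he; exact absurd he (not_lt_of_gt h)
      · exact h'
  choose e he heu using hc
  let a : Fin d → L := fun i => r (σ (i, e i false))
  have ha : Function.Injective a := by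
    intro i j h
    have := σ.injective (hr h)
    exact (Prod.ext_iff.1 this).1
  have hsm : StrictMono (a ∘ Tuple.sort a) :=
    (Tuple.monotone_sort a).strictMono_of_injective (ha.comp (Tuple.sort a).injective)
  refine ⟨(e, Tuple.sort a), ⟨fun i => he _, fun i j hij => hsm hij⟩, ?_⟩
  rintro ⟨e', π⟩ ⟨h1, h2⟩
  have hee : e' = e := by
    funext i
    apply heu
    have := h1 (π.symm i)
    simpa [hyp_apply] using this
  subst hee
  have hsm' : StrictMono (a ∘ π) := fun i j hij => h2 i j hij
  have : a ∘ π = a ∘ Tuple.sort a := by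
    rw [← StrictMono.range_inj hsm' hsm]
    rw [π.surjective.range_comp, (Tuple.sort a).surjective.range_comp]
  have h3 : π = Tuple.sort a := by
    ext1 i
    exact ha (congrFun this i)
  rw [h3]

open Classical in
lemma sum_pterm {d : ℕ} {L R : Type*} [LinearOrder L] [CommRing R] (r : Fin d × Bool → L)
    (hr : Function.Injective r)
    (N : Matrix (Fin d × Bool) (Fin d × Bool) R) (hN : ∀ a b, N a b = - N b a) :
    ∑ σ, pterm N σ = (Fintype.card ((Fin d → Perm Bool) × Perm (Fin d)) : R) *
      ∑ σ, if good r σ then pterm N σ else 0 := by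
  have h1 : ∀ σ, pterm N σ = ∑ x : (Fin d → Perm Bool) × Perm (Fin d),
      if good r (σ * hyp x) then pterm N (σ * hyp x) else 0 := by
    intro σ
    obtain ⟨x, hx, hu⟩ := existsUnique_good r hr σ
    rw [Finset.sum_eq_single x]
    · rw [if_pos hx, pterm_hyp N hN]
    · intro y _ hy
      rw [if_neg]
      intro h
      exact hy (hu y h)
    · simp
  rw [Finset.sum_congr rfl (fun σ _ => h1 σ)]
  rw [Finset.sum_comm]
  have h2 : ∀ x : (Fin d → Perm Bool) × Perm (Fin d),
      (∑ σ, if good r (σ * hyp x) then pterm N (σ * hyp x) else 0) =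
      ∑ σ, if good r σ then pterm N σ else 0 := by
    intro x
    exact Equiv.sum_comp (Equiv.mulRight (hyp x)) (fun σ => if good r σ then pterm N σ else 0)
  simp_rw [h2]
  simp

/-- Pfaffian cofactors (with multiplicity). -/
def pcof {K R : Type*} [Fintype K] [DecidableEq K] [CommRing R]
    (N : Matrix (K × Bool) (K × Bool) R) (i₀ : K) : Matrix (K × Bool) (K × Bool) R :=
  Matrix.of fun k l => ∑ σ : Perm (K × Bool),
    if σ (i₀, false) = k ∧ σ (i₀, true) = l then
      ((Perm.sign σ : ℤ) : R) * ∏ i ∈ univ.erase i₀, N (σ (i, false)) (σ (i, true)) else 0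

lemma mul_pcof {K R : Type*} [Fintype K] [DecidableEq K] [CommRing R]
    (N : Matrix (K × Bool) (K × Bool) R) (i₀ : K) (a k : K × Bool) :
    (N * (pcof N i₀)ᵀ) a k = ∑ σ : Perm (K × Bool), if σ (i₀, false) = k then
      ((Perm.sign σ : ℤ) : R) *
        (N a (σ (i₀, true)) * ∏ i ∈ univ.erase i₀, N (σ (i, false)) (σ (i, true))) else 0 := by
  simp only [Matrix.mul_apply, Matrix.transpose_apply, pcof, Matrix.of_apply, Finset.mul_sum]
  rw [Finset.sum_comm]
  refine Finset.sum_congr rfl fun σ _ => ?_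
  rw [Finset.sum_eq_single (σ (i₀, true))]
  · by_cases h : σ (i₀, false) = k
    · simp only [h, true_and, if_true]; ring
    · simp [h]
  · intro l _ hl
    rw [if_neg (fun h => hl h.2.symm), mul_zero]
  · simp

lemma mul_pcof_diag {K R : Type*} [Fintype K] [DecidableEq K] [CommRing R]
    (N : Matrix (K × Bool) (K × Bool) R) (hN : ∀ a b, N a b = - N b a) (i₀ : K) (a : K × Bool) :
    (Fintype.card (K × Bool) : R) * (N * (pcof N i₀)ᵀ) a a = ∑ σ, pterm N σ := by
  have h0 : (N * (pcof N i₀)ᵀ) a a =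
      ∑ σ : Perm (K × Bool), if σ (i₀, false) = a then pterm N σ else 0 := by
    rw [mul_pcof]
    refine Finset.sum_congr rfl fun σ _ => ?_
    split_ifs with h
    · rw [pterm, ← Finset.mul_prod_erase univ _ (Finset.mem_univ i₀), h]
    · rfl
  have h1 : ∀ p, (∑ σ : Perm (K × Bool), if σ p = a then pterm N σ else 0) =
      ∑ σ : Perm (K × Bool), if σ (i₀, false) = a then pterm N σ else 0 := by
    rintro ⟨j, b⟩
    let x : (K → Perm Bool) × Perm K := (fun _ => swap false b, swap i₀ j)
    have hx : hyp x (i₀, false) = (j, b) := by simp [hyp_apply, x]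
    rw [← Equiv.sum_comp (Equiv.mulRight (hyp x))
      (fun σ : Perm (K × Bool) => if σ (i₀, false) = a then pterm N σ else 0)]
    refine Finset.sum_congr rfl fun σ _ => ?_
    simp only [Equiv.coe_mulRight, pterm_hyp N hN, Perm.mul_apply, hx]
  have h2 : ∀ σ : Perm (K × Bool), pterm N σ = ∑ p, if σ p = a then pterm N σ else 0 := by
    intro σ
    rw [Finset.sum_eq_single (σ.symm a)]
    · simp
    · intro p _ hp
      rw [if_neg]
      rintro rfl
      simp at hp
    · simp
  rw [Finset.sum_congr rfl (fun σ _ => h2 σ)]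
  rw [Finset.sum_comm]
  simp_rw [h1]
  rw [h0]
  simp

lemma mul_pcof_offdiag {K R : Type*} [Fintype K] [DecidableEq K] [CommRing R]
    (N : Matrix (K × Bool) (K × Bool) R) (hN : ∀ a b, N a b = - N b a)
    (hN0 : ∀ a, N a a = 0) (i₀ : K) (a k : K × Bool) (hak : a ≠ k) :
    (N * (pcof N i₀)ᵀ) a k = 0 := by
  rw [mul_pcof]
  rw [← Finset.sum_fiberwise univ (fun σ : Perm (K × Bool) => σ.symm a)]
  refine Finset.sum_eq_zero ?_
  rintro ⟨j, b⟩ -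
  by_cases hj : j = i₀
  · refine Finset.sum_eq_zero fun σ hσ => ?_
    simp only [mem_filter, mem_univ, true_and] at hσ
    have hσ' : σ (j, b) = a := by rw [← hσ]; simp
    subst hj
    cases b with
    | false => rw [if_neg]; rw [hσ']; exact hak
    | true => rw [hσ', hN0]; simp
  · refine Finset.sum_involution (fun σ _ => σ * swap (i₀, true) (j, !b)) ?_ ?_ ?_ ?_
    · intro σ hσ
      simp only [mem_filter, mem_univ, true_and] at hσ
      have hσ' : σ (j, b) = a := by rw [← hσ]; simp
      have e1 : swap (i₀, true) (j, !b) (i₀, false) = (i₀, false) :=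
        swap_apply_of_ne_of_ne (by simp) (by simp [Ne.symm hj])
      have e2 : swap (i₀, true) (j, !b) (j, b) = (j, b) :=
        swap_apply_of_ne_of_ne (by simp [hj]) (by simp)
      have hs : Perm.sign (swap (i₀, true) (j, !b)) = -1 :=
        Perm.sign_swap (by simp [Ne.symm hj])
      simp only [Perm.mul_apply, e1, swap_apply_left, Perm.sign_mul, hs]
      split_ifs with h
      · have hjm : j ∈ univ.erase i₀ := by simp [hj]
        rw [← Finset.mul_prod_erase _ _ hjm, ← Finset.mul_prod_erase _ _ hjm]
        have e3 : ∏ x ∈ (univ.erase i₀).erase j,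
            N (σ (swap (i₀, true) (j, !b) (x, false))) (σ (swap (i₀, true) (j, !b) (x, true))) =
            ∏ x ∈ (univ.erase i₀).erase j, N (σ (x, false)) (σ (x, true)) := by
          refine Finset.prod_congr rfl fun x hx => ?_
          simp only [mem_erase, mem_univ, and_true] at hx
          rw [swap_apply_of_ne_of_ne (by simp) (by simp [hx.1]),
            swap_apply_of_ne_of_ne (by simp [hx.2]) (by simp [hx.1])]
        rw [e3]
        cases b with
        | false =>
          simp only [Bool.not_false] at *
          rw [e2, swap_apply_right, hσ']
          push_cast
          ring
        | true =>
          simp only [Bool.not_true] at *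
          rw [e2, swap_apply_right, hσ', hN (σ (j, false)) a, hN (σ (i₀, true)) a]
          push_cast
          ring
      · simp
    · intro σ _ _ h
      have h' : swap (i₀, true) (j, !b) = 1 := by simpa using h
      rw [swap_eq_one_iff] at h'
      exact hj (Prod.ext_iff.1 h').1.symm
    · intro σ hσ
      simp only [mem_filter, mem_univ, true_and] at hσ ⊢
      have hσ' : σ (j, b) = a := by rw [← hσ]; simp
      rw [Equiv.symm_apply_eq, Perm.mul_apply,
        swap_apply_of_ne_of_ne (by simp [hj]) (by simp), hσ']
    · intro σ _
      simp [mul_assoc]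

lemma mul_pcof_eq {K R : Type*} [Fintype K] [DecidableEq K] [CommRing R]
    (N : Matrix (K × Bool) (K × Bool) R) (hN : ∀ a b, N a b = - N b a)
    (hN0 : ∀ a, N a a = 0) (i₀ : K) :
    (Fintype.card (K × Bool) : R) • (N * (pcof N i₀)ᵀ) = (∑ σ, pterm N σ) • 1 := by
  ext a k
  rw [Matrix.smul_apply, Matrix.smul_apply, smul_eq_mul, smul_eq_mul]
  by_cases h : a = k
  · subst h
    rw [mul_pcof_diag N hN]; simp
  · rw [mul_pcof_offdiag N hN hN0 i₀ a k h, Matrix.one_apply_ne h]; simp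

/-- `(i, b) ↦ 2i + b`. -/
def pairEquiv (d : ℕ) : Fin d × Bool ≃ Fin (2 * d) where
  toFun p := if p.2 then fpair1 p.1 else fpair0 p.1
  invFun k := (⟨(k : ℕ) / 2, by have := k.isLt; omega⟩, decide ((k : ℕ) % 2 = 1))
  left_inv := by
    rintro ⟨i, b⟩
    cases b
    · ext <;> simp [fpair0]
    · ext <;> simp [fpair1]; omega
  right_inv := by
    intro k
    ext
    by_cases h : (k : ℕ) % 2 = 1
    · simp [h, fpair1]; omega
    · simp [h, fpair0]; omega

open Classical in
lemma pfAux_eq {d : ℕ} {R : Type*} [CommRing R] (N : Matrix (Fin (2 * d)) (Fin (2 * d)) R) :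
    pfAux N = ∑ σ, if good (pairEquiv d) σ then
      pterm (N.submatrix (pairEquiv d) (pairEquiv d)) σ else 0 := by
  unfold pfAux
  rw [← Equiv.sum_comp (pairEquiv d).permCongr]
  refine Finset.sum_congr rfl fun σ _ => ?_
  have h0 : ∀ i, (pairEquiv d).permCongr σ (fpair0 i) = pairEquiv d (σ (i, false)) := by
    intro i
    have : (fpair0 i) = pairEquiv d (i, false) := rfl
    rw [this, Equiv.permCongr_apply, Equiv.symm_apply_apply]
  have h1 : ∀ i, (pairEquiv d).permCongr σ (fpair1 i) = pairEquiv d (σ (i, true)) := by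
    intro i
    have : (fpair1 i) = pairEquiv d (i, true) := rfl
    rw [this, Equiv.permCongr_apply, Equiv.symm_apply_apply]
  simp only [h0, h1, good, pterm, Perm.sign_permCongr, Matrix.submatrix_apply]
  congr

/-- Pfaffian adjugate up to a nonzero integer multiple. -/
lemma exists_pf_adj {d : ℕ} (hd : 1 ≤ d) : ∃ c : ℕ, c ≠ 0 ∧
    ∀ {R : Type u} [CommRing R] (N : Matrix (Fin (2 * d)) (Fin (2 * d)) R),
    Nᵀ = -N → (∀ i, N i i = 0) →
    ∃ G : Matrix (Fin (2 * d)) (Fin (2 * d)) R, G * N = ((c : R) * pfAux N) • 1 := by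
  refine ⟨Fintype.card ((Fin d → Perm Bool) × Perm (Fin d)), Fintype.card_ne_zero, ?_⟩
  intro R _ N hN hN0
  have hN' : ∀ a b, N a b = - N b a := by
    intro a b
    have := congrFun (congrFun hN b) a
    simpa using this
  let N' := N.submatrix (pairEquiv d) (pairEquiv d)
  have h1 := mul_pcof_eq N' (fun a b => hN' _ _) (fun a => hN0 _) ⟨0, hd⟩
  rw [sum_pterm (pairEquiv d) (pairEquiv d).injective N' (fun a b => hN' _ _), ← pfAux_eq] at h1
  generalize pcof N' ⟨0, hd⟩ = P at h1
  set n : R := (Fintype.card (Fin d × Bool) : R)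
  have h2 := congrArg (fun Z => (Z.submatrix (pairEquiv d).symm (pairEquiv d).symm)ᵀ) h1
  refine ⟨-n • P.submatrix (pairEquiv d).symm (pairEquiv d).symm, ?_⟩
  have h3 : N = N'.submatrix (pairEquiv d).symm (pairEquiv d).symm := by
    ext; simp [N']
  have h4 : N'ᵀ = - N' := by
    ext a b; simpa [N'] using hN' _ _
  simp only [Matrix.submatrix_smul, Pi.smul_apply, Matrix.transpose_smul,
    Matrix.submatrix_one_equiv, Matrix.transpose_one] at h2
  rw [← h2, ← Matrix.submatrix_mul_equiv (e₂ := (pairEquiv d).symm), ← h3, Matrix.transpose_mul, hN]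
  simp [Matrix.transpose_submatrix]

end SympDet

namespace SympDet

open Equiv Finset Polynomial

lemma Jmat_map (d : ℕ) {R S : Type*} [CommRing R] [CommRing S] (φ : R →+* S) :
    (Jmat d R).map φ = Jmat d S := by
  ext k l
  simp only [Jmat, Matrix.map_apply, Matrix.of_apply]
  split_ifs <;> simp

lemma Jmat_mul_self (d : ℕ) (R : Type*) [CommRing R] : Jmat d R * Jmat d R = -1 := by
  ext k l
  rw [Matrix.mul_apply]
  by_cases hk : (k : ℕ) < d
  · rw [Finset.sum_eq_single (⟨(k : ℕ) + d, by omega⟩ : Fin (2 * d))]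
    · by_cases hkl : k = l
      · subst hkl
        simp [Jmat]; omega
      · have : (k : ℕ) ≠ l := fun h => hkl (Fin.ext h)
        have hl := l.isLt
        simp only [Jmat, Matrix.of_apply, Matrix.neg_apply, Matrix.one_apply_ne hkl]
        rw [if_neg (show ¬ ((k : ℕ) + d + d = l) by omega), 
          if_neg (show ¬ ((l : ℕ) + d = k + d) by omega)]
        simp
    · intro m _ hm
      have hm' : (m : ℕ) ≠ k + d := fun h => hm (Fin.ext h)
      have : Jmat d R k m = 0 := by
        simp only [Jmat, Matrix.of_apply]
        rw [if_neg (by omega), if_neg (by omega)]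
      rw [this, zero_mul]
    · simp
  · have hk2 := k.isLt
    rw [Finset.sum_eq_single (⟨(k : ℕ) - d, by omega⟩ : Fin (2 * d))]
    · by_cases hkl : k = l
      · subst hkl
        simp only [Jmat, Matrix.of_apply, Matrix.neg_apply, Matrix.one_apply_eq]
        rw [if_neg (by omega), if_pos (by omega), if_pos (by omega)]
        simp
      · have : (k : ℕ) ≠ l := fun h => hkl (Fin.ext h)
        have hl := l.isLt
        simp only [Jmat, Matrix.of_apply, Matrix.neg_apply, Matrix.one_apply_ne hkl]
        rw [if_neg (show ¬ ((k : ℕ) - d + d = l) by omega),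
          if_neg (show ¬ ((l : ℕ) + d = k - d) by omega)]
        simp
    · intro m _ hm
      have hm' : (m : ℕ) ≠ k - d := fun h => hm (Fin.ext h)
      have : Jmat d R k m = 0 := by
        simp only [Jmat, Matrix.of_apply]
        rw [if_neg (by omega), if_neg (by omega)]
      rw [this, zero_mul]
    · simp

lemma Jmat_transpose (d : ℕ) (hd : 1 ≤ d) (R : Type*) [CommRing R] :
    (Jmat d R)ᵀ = - Jmat d R := by
  ext k l
  simp only [Jmat, Matrix.transpose_apply, Matrix.neg_apply, Matrix.of_apply]
  split_ifs <;> first | omega | simp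

lemma Jmat_diag (d : ℕ) (hd : 1 ≤ d) (R : Type*) [CommRing R] (i : Fin (2 * d)) :
    Jmat d R i i = 0 := by
  simp only [Jmat, Matrix.of_apply]
  rw [if_neg (by omega), if_neg (by omega)]

lemma pfAux_map {d : ℕ} {R S : Type*} [CommRing R] [CommRing S] (φ : R →+* S)
    (N : Matrix (Fin (2 * d)) (Fin (2 * d)) R) : pfAux (N.map φ) = φ (pfAux N) := by
  simp only [pfAux, map_sum, Matrix.map_apply]
  refine Finset.sum_congr rfl fun σ _ => ?_
  split_ifs <;> simp

lemma Pf_map {d : ℕ} {R S : Type*} [CommRing R] [CommRing S] (φ : R →+* S)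
    (N : Matrix (Fin (2 * d)) (Fin (2 * d)) R) : Pf (N.map φ) = φ (Pf N) := by
  simp [Pf, pfAux_map]

/-- The matrix `(X - M) J`. -/
noncomputable def charN {d : ℕ} {A : Type*} [CommRing A]
    (M : Matrix (Fin (2 * d)) (Fin (2 * d)) A) : Matrix (Fin (2 * d)) (Fin (2 * d)) A[X] :=
  ((X : A[X]) • (1 : Matrix (Fin (2 * d)) (Fin (2 * d)) A[X]) - M.map C) * Jmat d A[X]

lemma charN_eq {d : ℕ} {A : Type*} [CommRing A]
    (M : Matrix (Fin (2 * d)) (Fin (2 * d)) A) :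
    charN M = (X : A[X]) • (Jmat d A).map C - (M * Jmat d A).map C := by
  rw [charN, sub_mul, Matrix.map_mul, Jmat_map d (C : A →+* A[X])]
  simp

lemma charN_apply {d : ℕ} {A : Type*} [CommRing A]
    (M : Matrix (Fin (2 * d)) (Fin (2 * d)) A) (k l) :
    charN M k l = X * C (Jmat d A k l) - C ((M * Jmat d A) k l) := by
  rw [charN_eq]; rfl

lemma charN_map {d : ℕ} {A B : Type*} [CommRing A] [CommRing B] (φ : A →+* B)
    (M : Matrix (Fin (2 * d)) (Fin (2 * d)) A) :
    charN (M.map φ) = (charN M).map (Polynomial.mapRingHom φ) := by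
  ext1 k l
  rw [Matrix.map_apply, charN_apply, charN_apply, ← Jmat_map d φ, ← Matrix.map_mul]
  simp

lemma pfCharpoly_map {d : ℕ} {A B : Type*} [CommRing A] [CommRing B] (φ : A →+* B)
    (M : Matrix (Fin (2 * d)) (Fin (2 * d)) A) :
    pfCharpoly (M.map φ) = (pfCharpoly M).map φ := by
  change Pf (charN _) = (Pf (charN M)).map φ
  rw [charN_map, Pf_map]; rfl

lemma aeval_of_mul {n : Type*} [Fintype n] [DecidableEq n] {A : Type*} [CommRing A]
    (M : Matrix n n A) (p : A[X]) (B : Matrix n n A[X])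
    (h : p • (1 : Matrix n n A[X]) = B * ((X : A[X]) • (1 : Matrix n n A[X]) - M.map C)) :
    aeval M p = 0 := by
  have hc : (X : A[X]) • (1 : Matrix n n A[X]) - M.map C = charmatrix M := by
    rw [charmatrix, Matrix.smul_one_eq_diagonal]; rfl
  rw [hc] at h
  apply_fun matPolyEquiv at h
  simp only [map_mul, matPolyEquiv_charmatrix] at h
  apply_fun fun p => p.eval M at h
  rw [eval_mul_X_sub_C] at h
  rw [matPolyEquiv_smul_one, eval_map] at h
  exact h

lemma aeval_torsion {d : ℕ} (hd : 1 ≤ d) {A : Type u} [CommRing A]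
    [IsDomain A] [CharZero A]
    (M : Matrix (Fin (2 * d)) (Fin (2 * d)) A)
    (halt : (M * Jmat d A)ᵀ = -(M * Jmat d A))
    (hdiag : ∀ i, (M * Jmat d A) i i = 0) :
    aeval M (pfCharpoly M) = 0 := by
  obtain ⟨c, hc, h⟩ := exists_pf_adj.{u} hd
  obtain ⟨G, hG⟩ := h (charN M) (by
      ext1 k l
      have h1 := congrFun (congrFun halt k) l
      have h2 := congrFun (congrFun (Jmat_transpose d hd A) k) l
      simp only [Matrix.transpose_apply, Matrix.neg_apply] at h1 h2 ⊢
      rw [charN_apply, charN_apply, h1, h2]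
      simp only [map_neg]
      ring) (by
      intro i
      rw [charN_apply, hdiag, Jmat_diag d hd]; simp)
  have h1 : aeval M ((c : A[X]) * pfAux (charN M)) = 0 := by
    refine aeval_of_mul M _ (Jmat d A[X] * G) ?_
    have hJ := Jmat_mul_self d A[X]
    have h2 := congrArg (fun Z => Jmat d A[X] * Z * Jmat d A[X]) hG
    simp only [charN, Matrix.mul_smul, Matrix.smul_mul, mul_one, hJ] at h2
    rw [← mul_assoc, ← mul_assoc, mul_assoc, hJ] at h2
    simp only [mul_neg, mul_one, smul_neg, neg_mul] at h2 ⊢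
    exact (neg_injective h2).symm
  have h2 : (c : Matrix (Fin (2 * d)) (Fin (2 * d)) A) * aeval M (pfAux (charN M)) = 0 := by
    rw [map_mul] at h1; simpa using h1
  have h3 : aeval M (pfAux (charN M)) = 0 := by
    rw [← nsmul_eq_mul] at h2
    ext i j
    have h4 := congrFun (congrFun h2 i) j
    rw [Matrix.smul_apply, nsmul_eq_mul, Matrix.zero_apply] at h4
    rcases mul_eq_zero.1 h4 with h5 | h5
    · exact absurd (by exact_mod_cast h5) hc
    · exact h5
  change aeval M (Pf (charN M)) = 0
  rw [Pf, map_mul, h3, mul_zero]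

/-- The generic alternating matrix. -/
noncomputable def genAlt (n : ℕ) : Matrix (Fin n) (Fin n) (MvPolynomial (Fin n × Fin n) ℤ) :=
  Matrix.of fun i j => if i < j then MvPolynomial.X (i, j) else
    if j < i then - MvPolynomial.X (j, i) else 0

lemma aeval_pf {d : ℕ} (hd : 1 ≤ d) {A : Type*} [CommRing A]
    (M : Matrix (Fin (2 * d)) (Fin (2 * d)) A)
    (halt : (M * Jmat d A)ᵀ = -(M * Jmat d A))
    (hdiag : ∀ i, (M * Jmat d A) i i = 0) :
    aeval M (pfCharpoly M) = 0 := by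
  let N := M * Jmat d A
  let φ : MvPolynomial (Fin (2 * d) × Fin (2 * d)) ℤ →+* A :=
    (MvPolynomial.aeval (fun p : Fin (2 * d) × Fin (2 * d) => N p.1 p.2)).toRingHom
  have hφ : (genAlt (2 * d)).map φ = N := by
    ext i j
    rw [Matrix.map_apply, genAlt, Matrix.of_apply]
    rcases lt_trichotomy i j with h | h | h
    · rw [if_pos h]; simp [φ]
    · subst h
      simp [N, hdiag]
    · rw [if_neg h.not_gt, if_pos h]
      have h1 := congrFun (congrFun halt j) i
      simp only [Matrix.transpose_apply, Matrix.neg_apply] at h1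
      simp [φ, N, h1]
  let U := -(genAlt (2 * d) * Jmat d (MvPolynomial (Fin (2 * d) × Fin (2 * d)) ℤ))
  have hUJ : U * Jmat d _ = genAlt (2 * d) := by
    simp only [U, neg_mul, mul_assoc, Jmat_mul_self]; simp
  have hU : U.map φ = M := by
    have : U.map φ = -((genAlt (2 * d)).map φ * (Jmat d _).map φ) := by
      rw [← Matrix.map_mul]; ext i j; simp only [U, Matrix.map_apply, Matrix.neg_apply, map_neg]
    rw [this, hφ, Jmat_map]
    simp only [N, mul_assoc, Jmat_mul_self]; simp
  have key := aeval_torsion hd U (by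
      rw [hUJ]; ext1 i j
      simp only [genAlt, Matrix.transpose_apply, Matrix.neg_apply, Matrix.of_apply]
      split_ifs <;> first | (exfalso; order) | simp) (by
      intro i; rw [hUJ]; simp [genAlt])
  have h2 : aeval (U.map φ) ((pfCharpoly U).map φ) = φ.mapMatrix (aeval U (pfCharpoly U)) := by
    rw [Polynomial.aeval_def, Polynomial.aeval_def, Polynomial.hom_eval₂, Polynomial.eval₂_map]
    congr 1
    refine RingHom.ext fun x => ?_
    · ext i j
      simp [Matrix.algebraMap_matrix_apply, Matrix.map_apply, apply_ite φ]
  rw [← hU, pfCharpoly_map, h2, key, map_zero]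

lemma pfAux_J (d : ℕ) : pfAux (Jmat d ℤ) * pfAux (Jmat d ℤ) = 1 := by
  -- the unique contributing matching
  let f : Fin (2 * d) → Fin (2 * d) := fun k =>
    ⟨(k : ℕ) / 2 + if (k : ℕ) % 2 = 1 then d else 0, by
      have := k.isLt; split_ifs <;> omega⟩
  have hf : Function.Injective f := by
    intro k l h
    have h' : (k : ℕ) / 2 + (if (k : ℕ) % 2 = 1 then d else 0) =
      (l : ℕ) / 2 + (if (l : ℕ) % 2 = 1 then d else 0) := congrArg Fin.val h
    have := k.isLt
    have := l.isLt
    ext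
    split_ifs at h' <;> omega
  let τ : Perm (Fin (2 * d)) := Equiv.ofBijective f (Finite.injective_iff_bijective.1 hf)
  have t0 : ∀ i : Fin d, (τ (fpair0 i) : ℕ) = i := by
    intro i
    change ((fpair0 i : Fin (2 * d)) : ℕ) / 2 + (if _ then d else 0) = (i : ℕ)
    simp [fpair0]
  have t1 : ∀ i : Fin d, (τ (fpair1 i) : ℕ) = i + d := by
    intro i
    change ((fpair1 i : Fin (2 * d)) : ℕ) / 2 + (if _ then d else 0) = (i : ℕ) + d
    simp [fpair1, Nat.add_mod]; omega
  have hs : pfAux (Jmat d ℤ) = Perm.sign τ := by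
    unfold pfAux
    rw [Finset.sum_eq_single τ]
    · rw [if_pos]
      · rw [Finset.prod_eq_one]
        · simp
        · intro i _
          simp [Jmat, t0, t1]
      · refine ⟨fun i => ?_, fun i j hij => ?_⟩
        · rw [Fin.lt_def, t0, t1]; have := i.isLt; omega
        · rw [Fin.lt_def, t0, t0]; exact hij
    · intro σ _ hσ
      split_ifs with hg
      · obtain ⟨g1, g2⟩ := hg
        by_contra hne
        apply hσ
        have hprod := right_ne_zero_of_mul hne
        have hi : ∀ i : Fin d, (σ (fpair1 i) : ℕ) = σ (fpair0 i) + d := by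
          intro i
          have h1 := Finset.prod_ne_zero_iff.1 hprod i (Finset.mem_univ i)
          have h2 := g1 i
          rw [Fin.lt_def] at h2
          simp only [Jmat, Matrix.of_apply] at h1
          by_contra h3
          rw [if_neg (by omega), if_neg (by omega)] at h1
          exact h1 rfl
        let s : Fin d → Fin d := fun i => ⟨σ (fpair0 i), by
          have := hi i; have := (σ (fpair1 i)).isLt; omega⟩
        have hsm : StrictMono s := fun i j hij => g2 i j hij
        have hsid : s = id := by
          rw [← StrictMono.range_inj hsm strictMono_id]
          rw [(Finite.injective_iff_surjective.1 hsm.injective).range_eq, Set.range_id]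
        have h0 : ∀ i : Fin d, (σ (fpair0 i) : ℕ) = i := fun i =>
          congrArg Fin.val (congrFun hsid i)
        apply Equiv.ext
        intro k
        obtain ⟨⟨i, b⟩, rfl⟩ := (pairEquiv d).surjective k
        cases b with
        | false =>
          change σ (fpair0 i) = τ (fpair0 i)
          ext; rw [h0, t0]
        | true =>
          change σ (fpair1 i) = τ (fpair1 i)
          ext; rw [hi, h0, t1]
      · rfl
    · simp
  rw [hs, ← Units.val_mul, Int.units_mul_self]; simp

lemma natDegree_charN {d : ℕ} {A : Type*} [CommRing A]
    (M : Matrix (Fin (2 * d)) (Fin (2 * d)) A) (k l) : (charN M k l).natDegree ≤ 1 := by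
  rw [charN_apply, mul_comm, sub_eq_add_neg, ← map_neg]
  exact natDegree_linear_le

lemma coeff_charN {d : ℕ} {A : Type*} [CommRing A]
    (M : Matrix (Fin (2 * d)) (Fin (2 * d)) A) (k l) : (charN M k l).coeff 1 = Jmat d A k l := by
  rw [charN_apply, mul_comm]
  simp [coeff_C]

lemma natDegree_pfCharpoly {d : ℕ} {A : Type*} [CommRing A]
    (M : Matrix (Fin (2 * d)) (Fin (2 * d)) A) : (pfCharpoly M).natDegree ≤ d := by
  change (Pf (charN M)).natDegree ≤ d
  unfold Pf pfAux
  rw [← C_eq_intCast]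
  refine (natDegree_C_mul_le _ _).trans ?_
  refine natDegree_sum_le_of_forall_le _ _ fun σ _ => ?_
  split_ifs
  · rw [← C_eq_intCast]
    refine (natDegree_C_mul_le _ _).trans ?_
    refine (natDegree_prod_le _ _).trans ?_
    refine (Finset.sum_le_sum fun i _ => natDegree_charN M _ _).trans ?_
    simp
  · simp

lemma coeff_pfCharpoly {d : ℕ} {A : Type*} [CommRing A]
    (M : Matrix (Fin (2 * d)) (Fin (2 * d)) A) : (pfCharpoly M).coeff d = 1 := by
  change (Pf (charN M)).coeff d = 1
  have h : (pfAux (charN M)).coeff d = pfAux (Jmat d A) := by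
    unfold pfAux
    rw [finsetSum_coeff]
    refine Finset.sum_congr rfl fun σ _ => ?_
    split_ifs
    · rw [← C_eq_intCast, coeff_C_mul]
      congr 1
      have := coeff_prod_of_natDegree_le (s := Finset.univ)
        (fun i : Fin d => charN M (σ (fpair0 i)) (σ (fpair1 i))) 1
        (fun i _ => natDegree_charN M _ _)
      simpa [coeff_charN] using this
    · simp
  have h2 : pfAux (Jmat d A) = ((pfAux (Jmat d ℤ) : ℤ) : A) := by
    rw [← Jmat_map d (Int.castRingHom A), pfAux_map]; rfl
  rw [Pf, ← C_eq_intCast, coeff_C_mul, h, h2, ← Int.cast_mul, pfAux_J, Int.cast_one]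

end SympDet

open SympDet in
/-- **Pfaffian Cayley–Hamilton theorem.** -/
theorem stmt_0 {d : ℕ} (hd : 1 ≤ d) {A : Type u} [CommRing A]
    (M : Matrix (Fin (2 * d)) (Fin (2 * d)) A)
    (hM : sympTr M = M)
    (halt : (M * Jmat d A)ᵀ = -(M * Jmat d A))
    (hdiag : ∀ i, (M * Jmat d A) i i = 0) :
    (pfCharpoly M).Monic ∧ (pfCharpoly M).coeff d = 1 ∧
      (∀ i : ℕ, d < i → (pfCharpoly M).coeff i = 0) ∧
      Polynomial.aeval M (pfCharpoly M) = 0 := by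
  refine ⟨Polynomial.monic_of_natDegree_le_of_coeff_eq_one d (natDegree_pfCharpoly M)
    (coeff_pfCharpoly M), coeff_pfCharpoly M, fun i hi =>
    Polynomial.coeff_eq_zero_of_natDegree_lt ((natDegree_pfCharpoly M).trans_lt hi),
    aeval_pf hd M halt hdiag⟩
end

section
/- Let A be a commutative ring with 2 ∈ A^×, let (R,*) be an involutive A-algebra, and let D : R → A be a 2d-dimensional *-determinant law. If P, P′ : R^+ → A are homogeneous degree-d polynomial laws such that both (D,P) and (D,P′) are weak symplectic determinant laws of dimension 2d, then P = P′. Moreover, writing χ^D(r,t) = Σ_{i=0}^{2d} (−1)^i Λ_i^D(r) t^{2d−i} and χ^P(r,t) = Σ_{i=0}^{d} (−1)^i T_i^P(r) t^{d−i}, one has the recursion Λ_i^D restricted to R^+ equals Σ_{j=0}^{i} T_j^P · T_{i−j}^P as polynomial laws R^+ → A for 1 ≤ i ≤ 2d, where T_j^P := 0 for j > d and T_0^P = 1. -/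
/-!
STATEMENT 1: uniqueness of the Pfaffian of a weak symplectic determinant law, and the
recursion `Λ_i^D|_{R⁺} = ∑_{j=0}^{i} T_j^P T_{i-j}^P` for `1 ≤ i ≤ 2d`.
-/

open scoped TensorProduct

universe u

namespace SympDet

/-! ### Polynomial laws valued in the base ring -/

variable (A : Type u) [CommRing A]

/-- An `A`-polynomial law on the `A`-module `M` with values in `A`: a family of maps
`M ⊗[A] B → B` (written `B ⊗[A] M → B`), one for each commutative `A`-algebra `B`,
natural in `B`. -/
structure PolyLaw (M : Type u) [AddCommGroup M] [Module A M] : Type (u + 1) where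
  toFun : ∀ (B : Type u) [CommRing B] [Algebra A B], B ⊗[A] M → B
  natural : ∀ (B B' : Type u) [CommRing B] [Algebra A B] [CommRing B'] [Algebra A B']
      (f : B →ₐ[A] B') (x : B ⊗[A] M),
      f (toFun B x) = toFun B' (LinearMap.rTensor M f.toLinearMap x)

variable {A}

/-- Homogeneity of degree `n` of a polynomial law. -/
def PolyLaw.IsHomog {M : Type u} [AddCommGroup M] [Module A M] (P : PolyLaw A M) (n : ℕ) : Prop :=
  ∀ (B : Type u) [CommRing B] [Algebra A B] (b : B) (x : B ⊗[A] M),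
    P.toFun B (b • x) = b ^ n * P.toFun B x

/-- The kernel of a polynomial law. -/
def PolyLaw.lawKer {M : Type u} [AddCommGroup M] [Module A M] (P : PolyLaw A M) : Set M :=
  {m | ∀ (B : Type u) [CommRing B] [Algebra A B] (b : B) (y : B ⊗[A] M),
    P.toFun B (b ⊗ₜ[A] m + y) = P.toFun B y}

/-- Multiplicativity of a polynomial law on an `A`-algebra `R`. -/
def PolyLaw.IsMult {R : Type u} [Ring R] [Algebra A R] (D : PolyLaw A R) : Prop :=
  ∀ (B : Type u) [CommRing B] [Algebra A B],
    D.toFun B 1 = 1 ∧ ∀ x y : B ⊗[A] R, D.toFun B (x * y) = D.toFun B x * D.toFun B y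

/-! ### Involutive algebras -/

variable (A) in
/-- An involutive `A`-algebra structure: an `A`-linear involutive anti-automorphism. -/
structure InvAlg (R : Type u) [Ring R] [Algebra A R] : Type u where
  star : R →ₗ[A] R
  star_one : star 1 = 1
  star_mul : ∀ x y : R, star (x * y) = star y * star x
  star_star : ∀ x : R, star (star x) = x

variable {R : Type u} [Ring R] [Algebra A R]

/-- The submodule of symmetric elements `R⁺`. -/
def InvAlg.plus (s : InvAlg A R) : Submodule A R :=
  LinearMap.ker (s.star - LinearMap.id)

theorem InvAlg.one_mem_plus (s : InvAlg A R) : (1 : R) ∈ s.plus := by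
  simp [InvAlg.plus, LinearMap.mem_ker, LinearMap.sub_apply, s.star_one]

/-- `1` as an element of `R⁺`. -/
def InvAlg.onePlus (s : InvAlg A R) : s.plus := ⟨1, s.one_mem_plus⟩

/-- The inclusion `B ⊗[A] R⁺ → B ⊗[A] R`. -/
noncomputable def InvAlg.incl (s : InvAlg A R) (B : Type u) [CommRing B] [Algebra A B] :
    B ⊗[A] ↥s.plus →ₗ[A] B ⊗[A] R :=
  LinearMap.lTensor B s.plus.subtype

/-- A weak symplectic determinant law of dimension `2d`. -/
structure IsWeakSympDet (s : InvAlg A R) (d : ℕ) (D : PolyLaw A R) (P : PolyLaw A ↥s.plus) :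
    Prop where
  mult : D.IsMult
  homog : D.IsHomog (2 * d)
  starInv : ∀ (B : Type u) [CommRing B] [Algebra A B] (x : B ⊗[A] R),
      D.toFun B (LinearMap.lTensor B s.star x) = D.toFun B x
  homogP : P.IsHomog d
  sq : ∀ (B : Type u) [CommRing B] [Algebra A B] (x : B ⊗[A] ↥s.plus),
      P.toFun B x ^ 2 = D.toFun B (s.incl B x)
  one : P.toFun A ((1 : A) ⊗ₜ[A] s.onePlus) = 1

/-! ### Characteristic polynomials and the Cayley-Hamilton ideal -/

/-- The characteristic polynomial `χ^P(x, t) = P_{B[t]}(t·e - x)` of a polynomial law,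
relative to a marked element `e` (the unit). -/
noncomputable def chPoly {M : Type u} [AddCommGroup M] [Module A M] (P : PolyLaw A M) (e : M)
    (B : Type u) [CommRing B] [Algebra A B] (x : B ⊗[A] M) : Polynomial B :=
  P.toFun (Polynomial B)
    ((Polynomial.X : Polynomial B) ⊗ₜ[A] e -
      LinearMap.rTensor M (IsScalarTower.toAlgHom A B (Polynomial B)).toLinearMap x)

/-- The coefficient `(-1)^i Λ_i` of `t^(n-i)` in the characteristic polynomial, with the
convention that it vanishes for `i > n`. -/
noncomputable def chCoeff {M : Type u} [AddCommGroup M] [Module A M] (P : PolyLaw A M) (e : M)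
    (n i : ℕ) (B : Type u) [CommRing B] [Algebra A B] (x : B ⊗[A] M) : B :=
  if i ≤ n then (-1 : B) ^ i * (chPoly P e B x).coeff (n - i) else 0

/-- `χ^P(x, x)`: the characteristic polynomial of `x ∈ (B ⊗ R)⁺` evaluated at `x` itself. -/
noncomputable def chEval (s : InvAlg A R) (P : PolyLaw A ↥s.plus) (B : Type u) [CommRing B]
    [Algebra A B] (x : B ⊗[A] ↥s.plus) : B ⊗[A] R :=
  Polynomial.aeval (s.incl B x) (chPoly P s.onePlus B x)

/-- The `A`-linear coefficient extraction map on multivariate polynomials. -/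
noncomputable def mvLcoeff {n : ℕ} (α : Fin n →₀ ℕ) : MvPolynomial (Fin n) A →ₗ[A] A where
  toFun p := MvPolynomial.coeff α p
  map_add' p q := MvPolynomial.coeff_add α p q
  map_smul' c p := MvPolynomial.coeff_smul α c p

/-- Extracting the coefficient of the monomial `t^α` from an element of `R[t_1,…,t_n]`. -/
noncomputable def tensorCoeff {n : ℕ} (α : Fin n →₀ ℕ) :
    (MvPolynomial (Fin n) A) ⊗[A] R →ₗ[A] R :=
  (TensorProduct.lid A R).toLinearMap ∘ₗ LinearMap.rTensor R (mvLcoeff α)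

/-- The generators `χ^P_α(r_1, …, r_n)` of the Cayley–Hamilton ideal of `P`:
the multihomogeneous coefficients of `χ^P(t_1 r_1 + ⋯ + t_n r_n, t_1 r_1 + ⋯ + t_n r_n)`. -/
def chGen (s : InvAlg A R) (P : PolyLaw A ↥s.plus) : Set R :=
  {y | ∃ (n : ℕ) (r : Fin n → ↥s.plus) (α : Fin n →₀ ℕ),
    y = tensorCoeff α
      (chEval s P (MvPolynomial (Fin n) A)
        (∑ i : Fin n, (MvPolynomial.X i : MvPolynomial (Fin n) A) ⊗ₜ[A] r i))}

/-- The Cayley–Hamilton ideal `CH(P)`: the two-sided ideal generated by the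
multihomogeneous coefficients of the characteristic polynomials. -/
def chIdeal (s : InvAlg A R) (P : PolyLaw A ↥s.plus) : TwoSidedIdeal R :=
  TwoSidedIdeal.span (chGen s P)

/-- A symplectic determinant law of dimension `2d`: a weak symplectic determinant law
such that `CH(P) ⊆ ker(D)`. -/
def IsSympDet (s : InvAlg A R) (d : ℕ) (D : PolyLaw A R) (P : PolyLaw A ↥s.plus) : Prop :=
  IsWeakSympDet s d D P ∧ ∀ y ∈ chIdeal s P, y ∈ D.lawKer

/-- A symplectic Cayley–Hamilton algebra of degree `2d`: a symplectic determinant law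
such that `χ^P(r, r) = 0` for all symmetric `r` over all base extensions. -/
def IsSympCH (s : InvAlg A R) (d : ℕ) (D : PolyLaw A R) (P : PolyLaw A ↥s.plus) : Prop :=
  IsSympDet s d D P ∧
    ∀ (B : Type u) [CommRing B] [Algebra A B] (x : B ⊗[A] ↥s.plus), chEval s P B x = 0

end SympDet

namespace SympDet

open Polynomial LaurentPolynomial

section helpers

variable {A : Type u} [CommRing A] {M : Type u} [AddCommGroup M] [Module A M]

theorem rT_smul {B B' : Type u} [CommRing B] [Algebra A B] [CommRing B'] [Algebra A B']
    (f : B →ₐ[A] B') (b : B) (x : B ⊗[A] M) :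
    LinearMap.rTensor M f.toLinearMap (b • x) = f b • LinearMap.rTensor M f.toLinearMap x := by
  induction x with
  | zero => simp
  | tmul c m => simp [TensorProduct.smul_tmul']
  | add x y hx hy => simp only [smul_add, map_add, hx, hy]

theorem rT_comp {B B' B'' : Type u} [CommRing B] [Algebra A B] [CommRing B'] [Algebra A B']
    [CommRing B''] [Algebra A B'']
    (f : B →ₐ[A] B') (g : B' →ₐ[A] B'') (h : B →ₐ[A] B'') (hh : ∀ b, g (f b) = h b)
    (x : B ⊗[A] M) :
    LinearMap.rTensor M g.toLinearMap (LinearMap.rTensor M f.toLinearMap x) =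
      LinearMap.rTensor M h.toLinearMap x := by
  induction x with
  | zero => simp
  | tmul c m => simp [hh]
  | add x y hx hy => simp only [map_add, hx, hy]

theorem chPoly_monic (P : PolyLaw A M) (e : M) (d : ℕ) (hd : P.IsHomog d)
    (h1 : P.toFun A ((1 : A) ⊗ₜ[A] e) = 1)
    (B : Type u) [CommRing B] [Algebra A B] [Nontrivial B] (x : B ⊗[A] M) :
    (chPoly P e B x).Monic ∧ (chPoly P e B x).natDegree = d := by
  set ι : B →ₐ[A] B[X] := IsScalarTower.toAlgHom A B (Polynomial B) with hι
  set g : B[X] := P.toFun B[X] ((1 : B[X]) ⊗ₜ[A] e - (X : B[X]) • LinearMap.rTensor M ι.toLinearMap x)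
    with hg
  have hone : P.toFun B ((1 : B) ⊗ₜ[A] e) = 1 := by
    have := P.natural A B (Algebra.ofId A B) ((1 : A) ⊗ₜ[A] e)
    rw [h1] at this
    simpa using this.symm
  have hg0 : g.coeff 0 = 1 := by
    let ε : B[X] →ₐ[A] B := (Polynomial.aeval (R := B) (0 : B)).restrictScalars A
    have := P.natural B[X] B ε ((1 : B[X]) ⊗ₜ[A] e - (X : B[X]) • LinearMap.rTensor M ι.toLinearMap x)
    rw [map_sub, rT_smul] at this
    have e0 : ε X = 0 := by simp [ε]
    rw [e0, zero_smul, sub_zero] at this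
    rw [LinearMap.rTensor_tmul, AlgHom.toLinearMap_apply, map_one, hone] at this
    rw [Polynomial.coeff_zero_eq_aeval_zero]
    exact this
  let φ : B[X] →ₐ[A] B[T;T⁻¹] := (Polynomial.toLaurentAlg (R := B)).restrictScalars A
  let ψ : B[X] →ₐ[A] B[T;T⁻¹] :=
    ((LaurentPolynomial.invert (R := B)).toAlgHom.comp
      (Polynomial.toLaurentAlg (R := B))).restrictScalars A
  let κ : B →ₐ[A] B[T;T⁻¹] := φ.comp ι
  have hφX : φ X = T 1 := by simp [φ]
  have hψX : ψ X = T (-1) := by simp [ψ]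
  have key : toLaurent (chPoly P e B x) = T (d : ℤ) * invert (toLaurent g) := by
    have k1 := P.natural B[X] B[T;T⁻¹] φ
      ((X : B[X]) ⊗ₜ[A] e - LinearMap.rTensor M ι.toLinearMap x)
    have k2 := P.natural B[X] B[T;T⁻¹] ψ
      ((1 : B[X]) ⊗ₜ[A] e - (X : B[X]) • LinearMap.rTensor M ι.toLinearMap x)
    rw [map_sub, rT_comp ι φ κ (fun b => rfl), LinearMap.rTensor_tmul,
      AlgHom.toLinearMap_apply, hφX] at k1
    rw [map_sub, rT_smul, rT_comp ι ψ κ (fun b => by simp [κ, φ, ψ, hι]), LinearMap.rTensor_tmul,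
      AlgHom.toLinearMap_apply, hψX, map_one] at k2
    have k3 := hd B[T;T⁻¹] (T 1)
      ((1 : B[T;T⁻¹]) ⊗ₜ[A] e - (T (-1) : B[T;T⁻¹]) • LinearMap.rTensor M κ.toLinearMap x)
    rw [smul_sub, smul_smul, ← T_add, TensorProduct.smul_tmul', smul_eq_mul, mul_one] at k3
    simp only [add_neg_cancel, T_zero, one_smul] at k3
    rw [← k1, ← k2, T_pow, mul_one] at k3
    exact k3
  have key2 : X ^ g.natDegree * chPoly P e B x = X ^ d * g.reverse := by
    apply Polynomial.toLaurent_injective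
    rw [map_mul, map_mul, toLaurent_reverse, key, Polynomial.toLaurent_X_pow,
      Polynomial.toLaurent_X_pow]
    ring
  have hrm : g.reverse.coeff g.natDegree = 1 := by
    rw [Polynomial.coeff_reverse, Polynomial.revAt_le le_rfl, Nat.sub_self, hg0]
  have hrmon : g.reverse.Monic :=
    Polynomial.monic_of_natDegree_le_of_coeff_eq_one _ g.reverse_natDegree_le hrm
  have hrdeg : g.reverse.natDegree = g.natDegree :=
    le_antisymm g.reverse_natDegree_le
      (Polynomial.le_natDegree_of_ne_zero (by rw [hrm]; exact one_ne_zero))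
  have hm : (X ^ g.natDegree * chPoly P e B x).Monic := by
    rw [key2]; exact (monic_X_pow d).mul hrmon
  have hfm : (chPoly P e B x).Monic := (monic_X_pow _).of_mul_monic_left hm
  refine ⟨hfm, ?_⟩
  have := congrArg natDegree key2
  rw [(monic_X_pow _).natDegree_mul hfm, (monic_X_pow _).natDegree_mul hrmon, hrdeg,
    natDegree_X_pow, natDegree_X_pow] at this
  omega

variable {R : Type u} [Ring R] [Algebra A R]

theorem incl_rT (s : InvAlg A R) {B B' : Type u} [CommRing B] [Algebra A B] [CommRing B']
    [Algebra A B'] (f : B →ₐ[A] B') (x : B ⊗[A] ↥s.plus) :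
    s.incl B' (LinearMap.rTensor _ f.toLinearMap x) =
      LinearMap.rTensor R f.toLinearMap (s.incl B x) := by
  induction x with
  | zero => simp
  | tmul c m => simp [InvAlg.incl]
  | add x y hx hy => simp only [map_add, hx, hy]

theorem chPoly_sq (s : InvAlg A R) (d : ℕ) (D : PolyLaw A R) (P : PolyLaw A ↥s.plus)
    (hP : IsWeakSympDet s d D P) (B : Type u) [CommRing B] [Algebra A B] (x : B ⊗[A] ↥s.plus) :
    chPoly P s.onePlus B x ^ 2 = chPoly D (1 : R) B (s.incl B x) := by
  unfold chPoly
  rw [hP.sq, map_sub, incl_rT]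
  rfl

theorem toFun_of_chPoly (P : PolyLaw A M) (e : M) 
    (B : Type u) [CommRing B] [Algebra A B] (x : B ⊗[A] M) :
    P.toFun B x = (chPoly P e B (-x)).eval 0 := by
  let ε : B[X] →ₐ[A] B := (Polynomial.aeval (R := B) (0 : B)).restrictScalars A
  have := P.natural B[X] B ε ((X : B[X]) ⊗ₜ[A] e -
    LinearMap.rTensor M (IsScalarTower.toAlgHom A B (Polynomial B)).toLinearMap (-x))
  rw [map_sub, rT_comp _ ε (AlgHom.id A B) (fun b => by simp [ε])] at this
  have e0 : ε X = 0 := by simp [ε]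
  rw [LinearMap.rTensor_tmul, AlgHom.toLinearMap_apply, e0] at this
  simp at this
  rw [← this]
  simp [ε, chPoly, Polynomial.aeval_def, Polynomial.eval₂_eq_eval_map]

theorem toFun_eq (h2 : IsUnit (2 : A)) (s : InvAlg A R) (d : ℕ) (D : PolyLaw A R)
    (P P' : PolyLaw A ↥s.plus)
    (hP : IsWeakSympDet s d D P) (hP' : IsWeakSympDet s d D P')
    (B : Type u) [CommRing B] [Algebra A B] (x : B ⊗[A] ↥s.plus) :
    P.toFun B x = P'.toFun B x := by
  rcases subsingleton_or_nontrivial B with _ | _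
  · exact Subsingleton.elim _ _
  rw [toFun_of_chPoly P s.onePlus, toFun_of_chPoly P' s.onePlus]
  congr 1
  obtain ⟨fm, fd⟩ := chPoly_monic P s.onePlus d hP.homogP hP.one B (-x)
  obtain ⟨gm, gd⟩ := chPoly_monic P' s.onePlus d hP'.homogP hP'.one B (-x)
  have hsq := (chPoly_sq s d D P hP B (-x)).trans (chPoly_sq s d D P' hP' B (-x)).symm
  generalize chPoly P s.onePlus B (-x) = f at *
  generalize chPoly P' s.onePlus B (-x) = g at *
  have h2B : IsUnit (2 : B) := by
    have := h2.map (algebraMap A B)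
    rwa [map_ofNat] at this
  obtain ⟨c, hc⟩ := h2B.exists_left_inv
  have hm : (Polynomial.C c * (f + g)).Monic := by
    apply Polynomial.monic_of_natDegree_le_of_coeff_eq_one d
    · refine (natDegree_C_mul_le _ _).trans ((natDegree_add_le _ _).trans ?_)
      simp [fd, gd]
    · have h3 : f.coeff d = 1 := by rw [← fd]; exact fm
      have h4 : g.coeff d = 1 := by rw [← gd]; exact gm
      rw [coeff_C_mul, coeff_add, h3, h4, one_add_one_eq_two, hc]
  have h0 : (Polynomial.C c * (f + g)) * (f - g) = 0 := by
    linear_combination Polynomial.C c * hsq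
  exact sub_eq_zero.1 ((hm.isRegular.left.mul_left_eq_zero_iff).1 h0)

theorem recursion (s : InvAlg A R) (d : ℕ) (D : PolyLaw A R)
    (P : PolyLaw A ↥s.plus) (hP : IsWeakSympDet s d D P) (i : ℕ) (hi : i ≤ 2 * d)
    (B : Type u) [CommRing B] [Algebra A B] (r : B ⊗[A] ↥s.plus) :
    chCoeff D (1 : R) (2 * d) i B (s.incl B r) =
      ∑ j ∈ Finset.range (i + 1),
        chCoeff P s.onePlus d j B r * chCoeff P s.onePlus d (i - j) B r := by
  rcases subsingleton_or_nontrivial B with _ | _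
  · exact Subsingleton.elim _ _
  obtain ⟨fm, fd⟩ := chPoly_monic P s.onePlus d hP.homogP hP.one B r
  have hc : ∀ j, chCoeff P s.onePlus d j B r =
      (-1) ^ j * (reflect d (chPoly P s.onePlus B r)).coeff j := by
    intro j
    unfold chCoeff
    rw [coeff_reflect]
    split_ifs with h
    · rw [revAt_le h]
    · rw [revAt_eq_self_of_lt (by omega), coeff_eq_zero_of_natDegree_lt (by omega), mul_zero]
  unfold chCoeff at hc ⊢
  simp only [hc]
  rw [if_pos hi, ← chPoly_sq s d D P hP, ← revAt_le hi, ← coeff_reflect, sq, two_mul,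
    reflect_mul _ _ fd.le fd.le, coeff_mul, Finset.Nat.sum_antidiagonal_eq_sum_range_succ_mk,
    Finset.mul_sum]
  refine Finset.sum_congr rfl fun j hj => ?_
  have : i = j + (i - j) := by have := Finset.mem_range.1 hj; omega
  conv_lhs => rw [this, pow_add, ← this]
  ring

end helpers

end SympDet

open SympDet in
theorem stmt_1 {A : Type u} [CommRing A] {R : Type u} [Ring R] [Algebra A R]
    (h2 : IsUnit (2 : A)) (s : InvAlg A R) (d : ℕ) (D : PolyLaw A R)
    (P P' : PolyLaw A ↥s.plus)
    (hP : IsWeakSympDet s d D P) (hP' : IsWeakSympDet s d D P') :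
    P = P' ∧
      ∀ i : ℕ, 1 ≤ i → i ≤ 2 * d →
        ∀ (B : Type u) [CommRing B] [Algebra A B] (r : B ⊗[A] ↥s.plus),
          chCoeff D (1 : R) (2 * d) i B (s.incl B r) =
            ∑ j ∈ Finset.range (i + 1),
              chCoeff P s.onePlus d j B r * chCoeff P s.onePlus d (i - j) B r := by
  refine ⟨?_, fun i _ hi B _ _ r => recursion s d D P hP i hi B r⟩
  have h := fun (B : Type u) [CommRing B] [Algebra A B] (x : B ⊗[A] ↥s.plus) =>
    toFun_eq h2 s d D P P' hP hP' B x
  clear hP hP'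
  cases P with | mk f hf =>
  cases P' with | mk g hg =>
  have : @f = @g := by
    funext B _ _ x
    exact h B x
  subst this
  rfl
end

section
/- Let A be a commutative ring with 2 ∈ A^×, let (R,*) be an involutive A-algebra, and let (D,P) be a weak symplectic determinant law of dimension 2d on (R,*). Then for every commutative A-algebra B, every x ∈ R ⊗_A B, and every y ∈ R^+ ⊗_A B such that P_B(y) is a non-zero-divisor in B, one has P_B(x·y·x^*) = D_B(x)·P_B(y). -/
/-!
STATEMENT 2: for a weak symplectic determinant law `(D, P)` of dimension `2d`, for every
commutative `A`-algebra `B`, every `x ∈ R ⊗ B` and every symmetric `y` with `P_B(y)` a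
non-zero-divisor, one has `P_B(x y x^*) = D_B(x) P_B(y)`. (The symmetric element `x y x^*`
is represented by any preimage `z ∈ R⁺ ⊗ B` of `x · y · x^*` in `R ⊗ B`.)
-/

open scoped TensorProduct

universe u

namespace SympDet

section helpers

variable {A : Type u} [CommRing A] {R : Type u} [Ring R] [Algebra A R]

theorem tstar_mul (s : InvAlg A R) (B : Type u) [CommRing B] [Algebra A B] (a b : B ⊗[A] R) :
    LinearMap.lTensor B s.star (a * b) =
      LinearMap.lTensor B s.star b * LinearMap.lTensor B s.star a := by
  induction a using TensorProduct.induction_on with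
  | zero => simp
  | add x y hx hy => rw [add_mul, map_add, map_add, mul_add, hx, hy]
  | tmul p r =>
    induction b using TensorProduct.induction_on with
    | zero => simp
    | add x y hx hy => rw [mul_add, map_add, map_add, add_mul, hx, hy]
    | tmul q t => simp [s.star_mul, mul_comm]

theorem tstar_tstar (s : InvAlg A R) (B : Type u) [CommRing B] [Algebra A B] (a : B ⊗[A] R) :
    LinearMap.lTensor B s.star (LinearMap.lTensor B s.star a) = a := by
  induction a using TensorProduct.induction_on with
  | zero => simp
  | add x y hx hy => rw [map_add, map_add, hx, hy]
  | tmul p r => simp [s.star_star]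

theorem star_coe (s : InvAlg A R) (r : s.plus) : s.star (r : R) = r := by
  have := r.2
  simpa [InvAlg.plus, LinearMap.mem_ker, sub_eq_zero] using this

theorem tstar_incl (s : InvAlg A R) (B : Type u) [CommRing B] [Algebra A B]
    (a : B ⊗[A] ↥s.plus) : LinearMap.lTensor B s.star (s.incl B a) = s.incl B a := by
  induction a using TensorProduct.induction_on with
  | zero => simp
  | add x y hx hy => rw [map_add, map_add, hx, hy]
  | tmul p r => simp [InvAlg.incl, star_coe]

/-- The projection `r ↦ c (r + r^*)` onto the symmetric elements (with `c = 1/2`). -/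
noncomputable def symProj (s : InvAlg A R) (c : A) : R →ₗ[A] ↥s.plus :=
  LinearMap.codRestrict s.plus (c • (s.star + LinearMap.id)) (by
    intro r
    simp [InvAlg.plus, LinearMap.mem_ker, sub_eq_zero, s.star_star, add_comm])

theorem symProj_incl (s : InvAlg A R) {c : A} (hc : c * 2 = 1) (B : Type u) [CommRing B]
    [Algebra A B] (a : B ⊗[A] ↥s.plus) :
    LinearMap.lTensor B (symProj s c) (s.incl B a) = a := by
  induction a using TensorProduct.induction_on with
  | zero => simp
  | add x y hx hy => rw [map_add, map_add, hx, hy]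
  | tmul p r =>
    have : symProj s c (r : R) = r := by
      apply Subtype.ext
      simp [symProj, star_coe]
      rw [← smul_add, ← two_smul A (r : R), smul_smul, hc, one_smul]
    simp [InvAlg.incl, this]

theorem incl_symProj (s : InvAlg A R) {c : A} (hc : c * 2 = 1) (B : Type u) [CommRing B]
    [Algebra A B] (a : B ⊗[A] R) (ha : LinearMap.lTensor B s.star a = a) :
    s.incl B (LinearMap.lTensor B (symProj s c) a) = a := by
  have key : ∀ a : B ⊗[A] R, s.incl B (LinearMap.lTensor B (symProj s c) a) =
      c • (LinearMap.lTensor B s.star a + a) := by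
    intro a
    induction a using TensorProduct.induction_on with
    | zero => simp
    | add x y hx hy => 
      rw [map_add, map_add, hx, hy, map_add, ← smul_add]
      congr 1
      abel
    | tmul p r =>
      simp [InvAlg.incl, symProj, TensorProduct.tmul_add]
  rw [key, ha, ← two_smul A a, smul_smul, hc, one_smul]

theorem rT_lT {M N : Type u} [AddCommGroup M] [Module A M] [AddCommGroup N] [Module A N]
    {B C : Type u} [CommRing B] [Algebra A B] [CommRing C] [Algebra A C] (f : B →ₐ[A] C)
    (g : M →ₗ[A] N) (a : B ⊗[A] M) :
    LinearMap.rTensor N f.toLinearMap (LinearMap.lTensor B g a) =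
      LinearMap.lTensor C g (LinearMap.rTensor M f.toLinearMap a) := by
  rw [← LinearMap.comp_apply, ← LinearMap.comp_apply, LinearMap.rTensor_comp_lTensor,
    LinearMap.lTensor_comp_rTensor]

theorem rT_mul {B C : Type u} [CommRing B] [Algebra A B] [CommRing C] [Algebra A C]
    (f : B →ₐ[A] C) (a b : B ⊗[A] R) :
    LinearMap.rTensor R f.toLinearMap (a * b) =
      LinearMap.rTensor R f.toLinearMap a * LinearMap.rTensor R f.toLinearMap b :=
  map_mul (Algebra.TensorProduct.map f (AlgHom.id A R)) a b

theorem rT_one {B C : Type u} [CommRing B] [Algebra A B] [CommRing C] [Algebra A C]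
    (f : B →ₐ[A] C) : LinearMap.rTensor R f.toLinearMap (1 : B ⊗[A] R) = 1 :=
  map_one (Algebra.TensorProduct.map f (AlgHom.id A R))

/-- Evaluation at `b` as an `A`-algebra map. -/
noncomputable def evA (A : Type u) [CommRing A] {B : Type u} [CommRing B] [Algebra A B] (b : B) :
    Polynomial B →ₐ[A] B :=
  (Polynomial.aeval b : Polynomial B →ₐ[B] B).restrictScalars A

/-- Constants as an `A`-algebra map. -/
noncomputable def constA (A : Type u) [CommRing A] (B : Type u) [CommRing B] [Algebra A B] :
    B →ₐ[A] Polynomial B := IsScalarTower.toAlgHom A B (Polynomial B)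

theorem ev_const {M : Type u} [AddCommGroup M] [Module A M] {B : Type u} [CommRing B]
    [Algebra A B] (b : B) (a : B ⊗[A] M) :
    LinearMap.rTensor M (evA A b).toLinearMap
      (LinearMap.rTensor M (constA A B).toLinearMap a) = a := by
  rw [← LinearMap.comp_apply, ← LinearMap.rTensor_comp]
  have : (evA A b).toLinearMap ∘ₗ (constA A B).toLinearMap = LinearMap.id := by
    ext x
    simp [evA, constA]
  rw [this]; simp

theorem nzd_of_coeff_zero {B : Type u} [CommRing B] (f g : Polynomial B)
    (hf : f.coeff 0 ∈ nonZeroDivisors B) (h : g * f = 0) : g = 0 := by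
  have : ∀ n, g.coeff n = 0 := by
    intro n
    induction n using Nat.strong_induction_on with
    | _ n ih =>
      have h1 : (g * f).coeff n = 0 := by rw [h]; simp
      rw [Polynomial.coeff_mul, Finset.sum_eq_single (n, 0)] at h1
      · exact (mem_nonZeroDivisors_iff_right.1 hf) _ h1
      · rintro ⟨i, j⟩ hij hne
        have hij' : i + j = n := by simpa using hij
        have : i < n := by
          rcases Nat.eq_zero_or_pos j with rfl | hj
          · exact absurd (by simpa using hij') (by simpa using hne)
          · omega
        simp [ih i this]
      · simp
  ext n; simp [this n]

end helpers

end SympDet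

open SympDet in
theorem stmt_2 {A : Type u} [CommRing A] {R : Type u} [Ring R] [Algebra A R]
    (h2 : IsUnit (2 : A)) (s : InvAlg A R) (d : ℕ) (D : PolyLaw A R) (P : PolyLaw A ↥s.plus)
    (h : IsWeakSympDet s d D P) :
    ∀ (B : Type u) [CommRing B] [Algebra A B] (x : B ⊗[A] R) (y : B ⊗[A] ↥s.plus),
      P.toFun B y ∈ nonZeroDivisors B →
        ∀ z : B ⊗[A] ↥s.plus,
          s.incl B z = x * s.incl B y * LinearMap.lTensor B s.star x →
            P.toFun B z = D.toFun B x * P.toFun B y := by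
  
  intro B _ _ x y hy z hz
  obtain ⟨u, hu⟩ := h2
  set c : A := ((u⁻¹ : Aˣ) : A) with hcdef
  have hc : c * 2 = 1 := by rw [← hu]; simp [c]
  set S := LinearMap.lTensor (Polynomial B) s.star with hS
  set ιx := LinearMap.rTensor R (constA A B).toLinearMap x with hιx
  set ιy := LinearMap.rTensor s.plus (constA A B).toLinearMap y with hιy
  set xt : Polynomial B ⊗[A] R :=
    1 + ((Polynomial.X : Polynomial B) ⊗ₜ[A] (1 : R)) * (ιx - 1) with hxt
  set w := xt * s.incl (Polynomial B) ιy * S xt with hw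
  have hSw : S w = w := by
    rw [hw, hS, tstar_mul, tstar_mul, tstar_tstar, tstar_incl, mul_assoc]
  set zt := LinearMap.lTensor (Polynomial B) (symProj s c) w with hzt
  have hzw : s.incl (Polynomial B) zt = w := incl_symProj s hc _ w hSw
  have hxev : ∀ b : B, LinearMap.rTensor R (evA A b).toLinearMap xt =
      1 + (b ⊗ₜ[A] (1 : R)) * (x - 1) := by
    intro b
    rw [hxt, map_add, rT_mul, map_sub, rT_one, hιx, ev_const]
    simp [evA]
  have hzev : ∀ b : B, LinearMap.rTensor s.plus (evA A b).toLinearMap zt =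
      LinearMap.lTensor B (symProj s c)
        ((1 + (b ⊗ₜ[A] (1 : R)) * (x - 1)) * s.incl B y *
          LinearMap.lTensor B s.star (1 + (b ⊗ₜ[A] (1 : R)) * (x - 1))) := by
    intro b
    rw [hzt, rT_lT, hw, rT_mul, rT_mul, hS, rT_lT, hxev]
    unfold InvAlg.incl
    rw [rT_lT, hιy, ev_const]
  have hz0 : LinearMap.rTensor s.plus (evA A (0 : B)).toLinearMap zt = y := by
    rw [hzev]
    have h1 : LinearMap.lTensor B s.star (1 : B ⊗[A] R) = 1 := by
      rw [Algebra.TensorProduct.one_def]; simp [s.star_one]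
    simp only [TensorProduct.zero_tmul, zero_mul, add_zero, one_mul, h1, mul_one]
    exact symProj_incl s hc B y
  have hx1 : (1 : B ⊗[A] R) + ((1 : B) ⊗ₜ[A] (1 : R)) * (x - 1) = x := by
    rw [← Algebra.TensorProduct.one_def, one_mul]; abel
  have hz1 : LinearMap.rTensor s.plus (evA A (1 : B)).toLinearMap zt = z := by
    rw [hzev, hx1, ← hz]
    exact symProj_incl s hc B z
  set p := P.toFun (Polynomial B) zt with hp
  set q := D.toFun (Polynomial B) xt * P.toFun (Polynomial B) ιy with hq
  have hsq : p ^ 2 = q ^ 2 := by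
    rw [hp, h.sq, hzw, hw, (h.mult _).2, (h.mult _).2, hS, h.starInv, hq, mul_pow, h.sq]
    ring
  have hq_ev : ∀ b : B, evA A b q =
      D.toFun B (1 + (b ⊗ₜ[A] (1 : R)) * (x - 1)) * P.toFun B y := by
    intro b
    rw [hq, map_mul, D.natural, P.natural, hxev, hιy, ev_const]
  have hp0 : evA A (0 : B) p = P.toFun B y := by rw [hp, P.natural, hz0]
  have hq0 : evA A (0 : B) q = P.toFun B y := by
    rw [hq_ev]; simp [(h.mult B).1]
  have h2B : (2 : B) ∈ nonZeroDivisors B := by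
    have : IsUnit (algebraMap A B (u : A)) := u.isUnit.map _
    rw [hu, map_ofNat] at this
    exact this.mem_nonZeroDivisors
  have hpq : p - q = 0 := by
    apply nzd_of_coeff_zero (p + q)
    · have : (p + q).coeff 0 = 2 * P.toFun B y := by
        have : (p + q).coeff 0 = evA A (0 : B) (p + q) := by
          simp [evA, Polynomial.coeff_zero_eq_aeval_zero]
        rw [this, map_add, hp0, hq0, two_mul]
      rw [this]
      exact mul_mem h2B hy
    · linear_combination hsq
  have hfin : evA A (1 : B) p = evA A (1 : B) q := by rw [sub_eq_zero.1 hpq]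
  rw [hq_ev, hx1, hp, P.natural, hz1] at hfin
  exact hfin
end

section
/- Let A be a commutative ring with 2 ∈ A^×, let (R,*) be an involutive A-algebra, and let (D,P) be a weak symplectic determinant law of dimension 2d on (R,*). Then ker(D) is stable under the involution *, and ker(D) ∩ R^+ ⊆ ker(P). Consequently, for every two-sided ideal I ⊆ ker(D) with I^* = I, the pair (D,P) factors uniquely through a weak symplectic determinant law (D̄,P̄) of dimension 2d on (R/I, *), i.e. D = D̄ ∘ (R → R/I) and P = P̄ ∘ (R^+ → (R/I)^+); and if (D,P) is a symplectic determinant law, so is (D̄,P̄). -/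
/-!
STATEMENT 4: for a weak symplectic determinant law `(D, P)` of dimension `2d`, the kernel
`ker D` is `*`-stable and `ker(D) ∩ R⁺ ⊆ ker(P)`; consequently, for every `*`-stable
two-sided ideal `I ⊆ ker D`, the pair `(D, P)` factors uniquely through a weak symplectic
determinant law on `R/I` (realized by any surjection `π : R → R'` with kernel `I`
commuting with the involutions), and symplectic determinant laws factor to symplectic
determinant laws.
-/

open scoped TensorProduct

universe u

namespace SympDet

section Factor

variable {A : Type u} [CommRing A] {M N : Type u} [AddCommGroup M] [Module A M]
  [AddCommGroup N] [Module A N]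

theorem PolyLaw.ext' {P Q : PolyLaw A M}
    (h : ∀ (B : Type u) [CommRing B] [Algebra A B] (x : B ⊗[A] M), P.toFun B x = Q.toFun B x) :
    P = Q := by
  cases P with
  | mk f hf =>
    cases Q with
    | mk g hg =>
      have : f = g := by
        funext B i1 i2 x
        exact h B x
      subst this
      rfl

theorem PolyLaw.eq_of_lTensor (P : PolyLaw A M) (φ : M →ₗ[A] N) (hφ : Function.Surjective φ)
    (hker : ∀ m, φ m = 0 → m ∈ P.lawKer) (B : Type u) [CommRing B] [Algebra A B]
    (x y : B ⊗[A] M) (hxy : LinearMap.lTensor B φ x = LinearMap.lTensor B φ y) :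
    P.toFun B x = P.toFun B y := by
  have hex : Function.Exact (LinearMap.ker φ).subtype φ := LinearMap.exact_subtype_ker_map φ
  have hT := lTensor_exact B hex hφ
  have hz : LinearMap.lTensor B φ (x - y) = 0 := by rw [map_sub, hxy, sub_self]
  obtain ⟨z, hz⟩ := (hT (x - y)).1 hz
  have key : ∀ (z : B ⊗[A] ↥(LinearMap.ker φ)) (w : B ⊗[A] M),
      P.toFun B (LinearMap.lTensor B (LinearMap.ker φ).subtype z + w) = P.toFun B w := by
    intro z
    induction z using TensorProduct.induction_on with
    | zero => intro w; simp
    | tmul b m =>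
      intro w
      rw [LinearMap.lTensor_tmul]
      exact hker m m.2 B b w
    | add a b ha hb =>
      intro w
      rw [map_add, add_assoc, ha, hb]
  have := key z y
  rw [hz, sub_add_cancel] at this
  exact this

/-- The factorization of a polynomial law through a surjection. -/
noncomputable def PolyLaw.factor (P : PolyLaw A M) (φ : M →ₗ[A] N)
    (hφ : Function.Surjective φ) (hker : ∀ m, φ m = 0 → m ∈ P.lawKer) : PolyLaw A N where
  toFun B _ _ x := P.toFun B (Function.surjInv (LinearMap.lTensor_surjective B hφ) x)
  natural B B' _ _ _ _ f x := by
    rw [P.natural B B' f]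
    apply P.eq_of_lTensor φ hφ hker
    rw [Function.surjInv_eq (LinearMap.lTensor_surjective B' hφ)]
    rw [← LinearMap.comp_apply, LinearMap.lTensor_comp_rTensor, ← LinearMap.rTensor_comp_lTensor,
      LinearMap.comp_apply, Function.surjInv_eq (LinearMap.lTensor_surjective B hφ)]

theorem PolyLaw.factor_apply (P : PolyLaw A M) (φ : M →ₗ[A] N)
    (hφ : Function.Surjective φ) (hker : ∀ m, φ m = 0 → m ∈ P.lawKer)
    (B : Type u) [CommRing B] [Algebra A B] (x : B ⊗[A] M) :
    (P.factor φ hφ hker).toFun B (LinearMap.lTensor B φ x) = P.toFun B x := by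
  apply P.eq_of_lTensor φ hφ hker
  rw [Function.surjInv_eq (LinearMap.lTensor_surjective B hφ)]

theorem lTensor_smul' (B : Type u) [CommRing B] [Algebra A B] (φ : M →ₗ[A] N) (b : B)
    (x : B ⊗[A] M) : LinearMap.lTensor B φ (b • x) = b • LinearMap.lTensor B φ x := by
  induction x using TensorProduct.induction_on with
  | zero => simp
  | tmul c m => simp [TensorProduct.smul_tmul']
  | add a b ha hb => simp [ha, hb]

theorem rTensor_smul' (B B' : Type u) [CommRing B] [Algebra A B] [CommRing B'] [Algebra A B']
    (f : B →ₐ[A] B') (b : B) (x : B ⊗[A] M) :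
    LinearMap.rTensor M f.toLinearMap (b • x) = f b • LinearMap.rTensor M f.toLinearMap x := by
  induction x using TensorProduct.induction_on with
  | zero => simp
  | tmul c m => simp [TensorProduct.smul_tmul']
  | add a b ha hb => simp [ha, hb]

theorem rTensor_rTensor' (B B' B'' : Type u) [CommRing B] [Algebra A B] [CommRing B']
    [Algebra A B'] [CommRing B''] [Algebra A B'']
    (f : B →ₐ[A] B') (g : B' →ₐ[A] B'') (x : B ⊗[A] M) :
    LinearMap.rTensor M g.toLinearMap (LinearMap.rTensor M f.toLinearMap x) =
      LinearMap.rTensor M (g.comp f).toLinearMap x := by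
  rw [← LinearMap.rTensor_comp_apply]
  rfl

open Polynomial in
/-- Square roots with constant coefficient one are unique when two is invertible. -/
theorem sqrt_unique {B : Type u} [CommRing B] (h2 : IsUnit (2 : B)) (p q : B[X])
    (hp : p.eval 0 = 1) (hq : q.eval 0 = 1) (h : p ^ 2 = q ^ 2) : p = q := by
  have hu : IsUnit ((p + q : B[X]) : PowerSeries B) := by
    rw [PowerSeries.isUnit_iff_constantCoeff]
    have : PowerSeries.constantCoeff ((p + q : B[X]) : PowerSeries B) = 2 := by
      rw [← PowerSeries.coeff_zero_eq_constantCoeff_apply, Polynomial.coeff_coe,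
        Polynomial.coeff_zero_eq_eval_zero, Polynomial.eval_add, hp, hq]
      norm_num
    rw [this]; exact h2
  have h0 : ((p + q : B[X]) : PowerSeries B) * ((p - q : B[X]) : PowerSeries B) = 0 := by
    rw [← Polynomial.coe_mul]
    have : (p + q) * (p - q) = 0 := by linear_combination h
    rw [this]; simp
  have h1 := (hu.mul_right_eq_zero).1 h0
  have h3 : p - q = 0 := by
    rw [← Polynomial.coe_inj (R := B)]
    simpa using h1
  exact sub_eq_zero.1 h3

open Polynomial in
/-- If `P(1 + T z) = P(1 + T w)` over `B[T]`, then `P(z) = P(w)`. -/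
theorem eq_of_one_add (P : PolyLaw A M) (d : ℕ) (hP : P.IsHomog d) (e : M)
    (B : Type u) [CommRing B] [Algebra A B] (z w : B ⊗[A] M)
    (h : P.toFun B[X] ((1 : B[X]) ⊗ₜ[A] e + (X : B[X]) •
        LinearMap.rTensor M (IsScalarTower.toAlgHom A B B[X]).toLinearMap z) =
      P.toFun B[X] ((1 : B[X]) ⊗ₜ[A] e + (X : B[X]) •
        LinearMap.rTensor M (IsScalarTower.toAlgHom A B B[X]).toLinearMap w)) :
    P.toFun B z = P.toFun B w := by
  let ι : B →ₐ[A] B[X] := IsScalarTower.toAlgHom A B B[X]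
  let L := LaurentPolynomial B
  let f : B[X] →ₐ[A] L := (Polynomial.toLaurentAlg (R := B)).restrictScalars A
  let g : B[X] →ₐ[A] L :=
    (((LaurentPolynomial.invert (R := B)).toAlgHom).comp
      (Polynomial.toLaurentAlg (R := B))).restrictScalars A
  have hfX : f X = LaurentPolynomial.T 1 := by
    simp [f]
  have hgX : g X = LaurentPolynomial.T (-1) := by
    simp [g]
  have hg : Function.Injective g := by
    intro a b hab
    exact Polynomial.toLaurent_injective ((LaurentPolynomial.invert (R := B)).injective hab)
  have hfg : f.comp ι = g.comp ι := by
    ext b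
    simp [f, g, ι, Polynomial.algebraMap_eq]
  have key : ∀ z : B ⊗[A] M,
      (LaurentPolynomial.T (-1) : L) ^ d * f (P.toFun B[X] ((1 : B[X]) ⊗ₜ[A] e + (X : B[X]) •
        LinearMap.rTensor M ι.toLinearMap z)) =
      g (P.toFun B[X] ((X : B[X]) ⊗ₜ[A] e + LinearMap.rTensor M ι.toLinearMap z)) := by
    intro z
    rw [P.natural, P.natural, ← hP, map_add, map_add, rTensor_smul', rTensor_rTensor',
      rTensor_rTensor', hfg, smul_add, smul_smul, hfX, ← LaurentPolynomial.T_add,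
      LinearMap.rTensor_tmul, LinearMap.rTensor_tmul, TensorProduct.smul_tmul']
    simp only [AlgHom.toLinearMap_apply, map_one, hgX, smul_eq_mul, mul_one]
    simp
    rfl
  have h1 : P.toFun B[X] ((X : B[X]) ⊗ₜ[A] e + LinearMap.rTensor M ι.toLinearMap z) =
      P.toFun B[X] ((X : B[X]) ⊗ₜ[A] e + LinearMap.rTensor M ι.toLinearMap w) := by
    apply hg
    rw [← key, ← key]
    exact congrArg _ (congrArg f h)
  let ev : B[X] →ₐ[A] B := (Polynomial.aeval (0 : B)).restrictScalars A
  have hev : ev.comp ι = AlgHom.id A B := by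
    ext b
    simp [ev, ι, Polynomial.algebraMap_eq]
  have h2 := congrArg ev h1
  rw [P.natural, P.natural, map_add, map_add, rTensor_rTensor', rTensor_rTensor', hev,
    LinearMap.rTensor_tmul] at h2
  simpa [ev] using h2

end Factor

section Weak

variable {A : Type u} [CommRing A] {R : Type u} [Ring R] [Algebra A R]

open Polynomial in
theorem lawKer_plus (h2 : IsUnit (2 : A)) (s : InvAlg A R) (d : ℕ) (D : PolyLaw A R)
    (P : PolyLaw A ↥s.plus) (h : IsWeakSympDet s d D P) (x : R) (hx : x ∈ s.plus)
    (hD : x ∈ D.lawKer) : (⟨x, hx⟩ : ↥s.plus) ∈ P.lawKer := by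
  intro B _ _ b y
  apply eq_of_one_add P d h.homogP s.onePlus
  let ι : B →ₐ[A] B[X] := IsScalarTower.toAlgHom A B B[X]
  have h2B : IsUnit (2 : B) := by
    have := h2.map (algebraMap A B)
    rwa [map_ofNat] at this
  have hone : P.toFun B ((1 : B) ⊗ₜ[A] s.onePlus) = 1 := by
    have := P.natural A B (Algebra.ofId A B) ((1 : A) ⊗ₜ[A] s.onePlus)
    rw [h.one] at this
    simpa using this.symm
  have hev : ∀ z : B ⊗[A] ↥s.plus, (P.toFun B[X] ((1 : B[X]) ⊗ₜ[A] s.onePlus + (X : B[X]) •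
        LinearMap.rTensor s.plus ι.toLinearMap z)).eval 0 = 1 := by
    intro z
    let ev : B[X] →ₐ[A] B := (Polynomial.aeval (0 : B)).restrictScalars A
    have hev : ∀ p : B[X], ev p = p.eval 0 := by
      intro p
      simp [ev, Polynomial.aeval_def, Polynomial.eval₂_eq_eval_map]
    rw [← hev, P.natural, map_add, rTensor_smul', hev, Polynomial.eval_X, zero_smul, add_zero]
    simp [hone]
  apply sqrt_unique h2B _ _ (hev _) (hev _)
  rw [h.sq, h.sq]
  have : s.incl B[X] ((1 : B[X]) ⊗ₜ[A] s.onePlus + (X : B[X]) •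
        LinearMap.rTensor s.plus ι.toLinearMap (b ⊗ₜ[A] (⟨x, hx⟩ : ↥s.plus) + y)) =
      (X * ι b) ⊗ₜ[A] x + s.incl B[X] ((1 : B[X]) ⊗ₜ[A] s.onePlus + (X : B[X]) •
        LinearMap.rTensor s.plus ι.toLinearMap y) := by
    simp only [InvAlg.incl, map_add, smul_add, LinearMap.rTensor_tmul, TensorProduct.smul_tmul',
      LinearMap.lTensor_tmul, smul_eq_mul, AlgHom.toLinearMap_apply, Submodule.subtype_apply]
    abel
  change D.toFun B[X] (s.incl B[X] ((1 : B[X]) ⊗ₜ[A] s.onePlus + (X : B[X]) •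
        LinearMap.rTensor s.plus ι.toLinearMap (b ⊗ₜ[A] (⟨x, hx⟩ : ↥s.plus) + y))) = _
  rw [this]
  exact hD _ _ _

theorem lawKer_star (s : InvAlg A R) (d : ℕ) (D : PolyLaw A R)
    (P : PolyLaw A ↥s.plus) (h : IsWeakSympDet s d D P) (x : R)
    (hD : x ∈ D.lawKer) : s.star x ∈ D.lawKer := by
  intro B _ _ b y
  have hss : s.star ∘ₗ s.star = LinearMap.id := by
    ext x; simp [s.star_star]
  rw [← h.starInv, map_add, LinearMap.lTensor_tmul, s.star_star, hD, h.starInv]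

variable {R' : Type u} [Ring R'] [Algebra A R']

theorem mem_plus (s : InvAlg A R) (x : R) : x ∈ s.plus ↔ s.star x = x := by
  simp [InvAlg.plus, LinearMap.mem_ker, sub_eq_zero]

/-- The map induced on symmetric elements. -/
def plusMap (s : InvAlg A R) (s' : InvAlg A R') (π : R →ₐ[A] R')
    (hπ : ∀ x, π (s.star x) = s'.star (π x)) : ↥s.plus →ₗ[A] ↥s'.plus :=
  π.toLinearMap.restrict (p := s.plus) (q := s'.plus) (by
    intro x hx
    rw [mem_plus] at hx ⊢
    change s'.star (π x) = π x
    rw [← hπ, hx])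

theorem plusMap_coe (s : InvAlg A R) (s' : InvAlg A R') (π : R →ₐ[A] R')
    (hπ : ∀ x, π (s.star x) = s'.star (π x)) (x : ↥s.plus) :
    (plusMap s s' π hπ x : R') = π x := rfl

theorem plusMap_surj (h2 : IsUnit (2 : A)) (s : InvAlg A R) (s' : InvAlg A R') (π : R →ₐ[A] R')
    (hπ : ∀ x, π (s.star x) = s'.star (π x)) (hs : Function.Surjective π) :
    Function.Surjective (plusMap s s' π hπ) := by
  rintro ⟨y, hy⟩
  obtain ⟨x, rfl⟩ := hs y
  rw [mem_plus] at hy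
  obtain ⟨u, hu⟩ := h2.exists_left_inv
  refine ⟨⟨u • (x + s.star x), ?_⟩, ?_⟩
  · rw [mem_plus, map_smul, map_add, s.star_star, add_comm]
  · apply Subtype.ext
    rw [plusMap_coe]
    change π (u • (x + s.star x)) = π x
    rw [map_smul, map_add, hπ, hy, ← two_smul A, smul_smul, hu, one_smul]

theorem lTensor_incl (s : InvAlg A R) (s' : InvAlg A R') (π : R →ₐ[A] R')
    (hπ : ∀ x, π (s.star x) = s'.star (π x)) (B : Type u) [CommRing B] [Algebra A B]
    (x : B ⊗[A] ↥s.plus) :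
    s'.incl B (LinearMap.lTensor B (plusMap s s' π hπ) x) =
      LinearMap.lTensor B π.toLinearMap (s.incl B x) := by
  simp only [InvAlg.incl]
  rw [← LinearMap.lTensor_comp_apply, ← LinearMap.lTensor_comp_apply]
  rfl

theorem lTensor_algHom (π : R →ₐ[A] R') (B : Type u) [CommRing B] [Algebra A B]
    (x : B ⊗[A] R) :
    LinearMap.lTensor B π.toLinearMap x = Algebra.TensorProduct.map (AlgHom.id B B) π x := by
  induction x using TensorProduct.induction_on with
  | zero => simp
  | tmul c m => simp
  | add a b ha hb => simp only [map_add, ha, hb]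

theorem weak_factor (s : InvAlg A R) (d : ℕ) (D : PolyLaw A R)
    (P : PolyLaw A ↥s.plus) (h : IsWeakSympDet s d D P) (s' : InvAlg A R') (π : R →ₐ[A] R')
    (hs : Function.Surjective π) (hπ : ∀ x, π (s.star x) = s'.star (π x))
    (hps : Function.Surjective (plusMap s s' π hπ))
    (D' : PolyLaw A R') (P' : PolyLaw A ↥s'.plus)
    (hD : ∀ (B : Type u) [CommRing B] [Algebra A B] (x : B ⊗[A] R),
      D'.toFun B (LinearMap.lTensor B π.toLinearMap x) = D.toFun B x)
    (hP : ∀ (B : Type u) [CommRing B] [Algebra A B] (x : B ⊗[A] ↥s.plus),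
      P'.toFun B (LinearMap.lTensor B (plusMap s s' π hπ) x) = P.toFun B x) :
    IsWeakSympDet s' d D' P' where
  mult B _ _ := by
    have hsB : Function.Surjective (LinearMap.lTensor B π.toLinearMap) :=
      LinearMap.lTensor_surjective B hs
    constructor
    · have := hD B 1
      rw [lTensor_algHom, map_one, (h.mult B).1] at this
      exact this
    · intro x y
      obtain ⟨x, rfl⟩ := hsB x
      obtain ⟨y, rfl⟩ := hsB y
      rw [hD, hD, ← (h.mult B).2, ← hD, lTensor_algHom, lTensor_algHom, lTensor_algHom, map_mul]
  homog B _ _ b x := by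
    obtain ⟨x, rfl⟩ := LinearMap.lTensor_surjective B (g := π.toLinearMap) hs x
    rw [← lTensor_smul', hD, hD, h.homog]
  starInv B _ _ x := by
    obtain ⟨x, rfl⟩ := LinearMap.lTensor_surjective B (g := π.toLinearMap) hs x
    have hc : s'.star ∘ₗ π.toLinearMap = π.toLinearMap ∘ₗ s.star := by
      ext x; exact (hπ x).symm
    rw [← LinearMap.lTensor_comp_apply, hc, LinearMap.lTensor_comp_apply, hD, hD, h.starInv]
  homogP B _ _ b x := by
    obtain ⟨x, rfl⟩ := LinearMap.lTensor_surjective B hps x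
    rw [← lTensor_smul', hP, hP, h.homogP]
  sq B _ _ x := by
    obtain ⟨x, rfl⟩ := LinearMap.lTensor_surjective B hps x
    rw [hP, lTensor_incl, hD, h.sq]
  one := by
    have h1 : plusMap s s' π hπ s.onePlus = s'.onePlus := by
      apply Subtype.ext
      rw [plusMap_coe]
      exact map_one π
    rw [← h1, ← LinearMap.lTensor_tmul, hP, h.one]

theorem chPoly_factor (s : InvAlg A R) 
    (P : PolyLaw A ↥s.plus) (s' : InvAlg A R') (π : R →ₐ[A] R')
    (hπ : ∀ x, π (s.star x) = s'.star (π x))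
    (P' : PolyLaw A ↥s'.plus)
    (hP : ∀ (B : Type u) [CommRing B] [Algebra A B] (x : B ⊗[A] ↥s.plus),
      P'.toFun B (LinearMap.lTensor B (plusMap s s' π hπ) x) = P.toFun B x)
    (B : Type u) [CommRing B] [Algebra A B] (x : B ⊗[A] ↥s.plus) :
    chPoly P' s'.onePlus B (LinearMap.lTensor B (plusMap s s' π hπ) x) =
      chPoly P s.onePlus B x := by
  have h1 : plusMap s s' π hπ s.onePlus = s'.onePlus := by
    apply Subtype.ext
    rw [plusMap_coe]
    exact map_one π
  unfold chPoly
  rw [← hP, map_sub, LinearMap.lTensor_tmul, h1, ← LinearMap.comp_apply,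
    LinearMap.rTensor_comp_lTensor, ← LinearMap.lTensor_comp_rTensor, LinearMap.comp_apply]

theorem chEval_factor (s : InvAlg A R) 
    (P : PolyLaw A ↥s.plus) (s' : InvAlg A R') (π : R →ₐ[A] R')
    (hπ : ∀ x, π (s.star x) = s'.star (π x))
    (P' : PolyLaw A ↥s'.plus)
    (hP : ∀ (B : Type u) [CommRing B] [Algebra A B] (x : B ⊗[A] ↥s.plus),
      P'.toFun B (LinearMap.lTensor B (plusMap s s' π hπ) x) = P.toFun B x)
    (B : Type u) [CommRing B] [Algebra A B] (x : B ⊗[A] ↥s.plus) :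
    chEval s' P' B (LinearMap.lTensor B (plusMap s s' π hπ) x) =
      LinearMap.lTensor B π.toLinearMap (chEval s P B x) := by
  unfold chEval
  rw [chPoly_factor s P s' π hπ P' hP, lTensor_incl, lTensor_algHom, lTensor_algHom,
    Polynomial.aeval_algHom_apply]

theorem chGen_factor (s : InvAlg A R) 
    (P : PolyLaw A ↥s.plus) (s' : InvAlg A R') (π : R →ₐ[A] R')
    (hπ : ∀ x, π (s.star x) = s'.star (π x))
    (hps : Function.Surjective (plusMap s s' π hπ))
    (P' : PolyLaw A ↥s'.plus)
    (hP : ∀ (B : Type u) [CommRing B] [Algebra A B] (x : B ⊗[A] ↥s.plus),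
      P'.toFun B (LinearMap.lTensor B (plusMap s s' π hπ) x) = P.toFun B x) :
    chGen s' P' ⊆ π '' chGen s P := by
  rintro y ⟨n, r, α, rfl⟩
  choose r0 hr0 using fun i => hps (r i)
  refine ⟨_, ⟨n, r0, α, rfl⟩, ?_⟩
  have : (∑ i : Fin n, (MvPolynomial.X i : MvPolynomial (Fin n) A) ⊗ₜ[A] r i) =
      LinearMap.lTensor _ (plusMap s s' π hπ)
        (∑ i : Fin n, (MvPolynomial.X i : MvPolynomial (Fin n) A) ⊗ₜ[A] r0 i) := by
    simp [map_sum, hr0]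
  rw [this, chEval_factor s P s' π hπ P' hP]
  generalize chEval s P (MvPolynomial (Fin n) A)
    (∑ i : Fin n, (MvPolynomial.X i : MvPolynomial (Fin n) A) ⊗ₜ[A] r0 i) = z
  induction z using TensorProduct.induction_on with
  | zero => simp
  | tmul c m => simp [tensorCoeff]
  | add a b ha hb => simp only [map_add, ha, hb]

theorem span_image (π : R →ₐ[A] R') (hs : Function.Surjective π) (S : Set R) (T : Set R')
    (hT : T ⊆ π '' S) (y : R') (hy : y ∈ TwoSidedIdeal.span T) :
    ∃ x ∈ TwoSidedIdeal.span S, π x = y := by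
  let J : TwoSidedIdeal R' := TwoSidedIdeal.mk' {y | ∃ x ∈ TwoSidedIdeal.span S, π x = y}
    ⟨0, zero_mem _, map_zero π⟩
    (by
      rintro _ _ ⟨a, ha, rfl⟩ ⟨b, hb, rfl⟩
      exact ⟨a + b, add_mem ha hb, map_add π a b⟩)
    (by
      rintro _ ⟨a, ha, rfl⟩
      exact ⟨-a, neg_mem ha, map_neg π a⟩)
    (by
      rintro x _ ⟨a, ha, rfl⟩
      obtain ⟨x, rfl⟩ := hs x
      exact ⟨x * a, TwoSidedIdeal.mul_mem_left _ _ _ ha, map_mul π _ _⟩)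
    (by
      rintro _ x ⟨a, ha, rfl⟩
      obtain ⟨x, rfl⟩ := hs x
      exact ⟨a * x, TwoSidedIdeal.mul_mem_right _ _ _ ha, map_mul π _ _⟩)
  have hJ : TwoSidedIdeal.span T ≤ J := by
    rw [TwoSidedIdeal.span_le]
    intro t ht
    obtain ⟨x, hx, rfl⟩ := hT ht
    rw [SetLike.mem_coe, TwoSidedIdeal.mem_mk']
    exact ⟨x, TwoSidedIdeal.subset_span hx, rfl⟩
  have := hJ hy
  rwa [TwoSidedIdeal.mem_mk'] at this

end Weak

end SympDet

open SympDet in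
theorem stmt_4 {A : Type u} [CommRing A] {R : Type u} [Ring R] [Algebra A R]
    (h2 : IsUnit (2 : A)) (s : InvAlg A R) (d : ℕ) (D : PolyLaw A R) (P : PolyLaw A ↥s.plus)
    (h : IsWeakSympDet s d D P) :
    (∀ x ∈ D.lawKer, s.star x ∈ D.lawKer) ∧
    (∀ (x : R) (hx : x ∈ s.plus), x ∈ D.lawKer → (⟨x, hx⟩ : ↥s.plus) ∈ P.lawKer) ∧
    (∀ (I : TwoSidedIdeal R), (∀ x ∈ I, x ∈ D.lawKer) → (∀ x ∈ I, s.star x ∈ I) →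
      ∀ (R' : Type u) [Ring R'] [Algebra A R'] (s' : InvAlg A R') (π : R →ₐ[A] R'),
        Function.Surjective π → (∀ x, π (s.star x) = s'.star (π x)) →
        (∀ x : R, π x = 0 ↔ x ∈ I) →
        ∃! q : PolyLaw A R' × PolyLaw A ↥s'.plus,
          IsWeakSympDet s' d q.1 q.2 ∧
          (∀ (B : Type u) [CommRing B] [Algebra A B] (x : B ⊗[A] R),
            D.toFun B x = q.1.toFun B (LinearMap.lTensor B π.toLinearMap x)) ∧
          (∀ (πp : ↥s.plus →ₗ[A] ↥s'.plus), (∀ y : ↥s.plus, ((πp y : R') = π (y : R))) →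
            ∀ (B : Type u) [CommRing B] [Algebra A B] (y : B ⊗[A] ↥s.plus),
              P.toFun B y = q.2.toFun B (LinearMap.lTensor B πp y)) ∧
          (IsSympDet s d D P → IsSympDet s' d q.1 q.2)) := by
  refine ⟨fun x hx => lawKer_star s d D P h x hx, fun x hx hD => lawKer_plus h2 s d D P h x hx hD,
    ?_⟩
  intro I hI _ R' _ _ s' π hs hπ hker
  have hps := plusMap_surj h2 s s' π hπ hs
  have hkD : ∀ m, π.toLinearMap m = 0 → m ∈ D.lawKer := fun m hm => hI m ((hker m).1 hm)
  have hkP : ∀ m, plusMap s s' π hπ m = 0 → m ∈ P.lawKer := by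
    intro m hm
    apply lawKer_plus h2 s d D P h m.1 m.2
    apply hkD
    exact congrArg Subtype.val hm
  have hD' := D.factor_apply π.toLinearMap hs hkD
  have hP' := P.factor_apply (plusMap s s' π hπ) hps hkP
  have hW := weak_factor s d D P h s' π hs hπ hps _ _ hD' hP'
  refine ⟨(D.factor π.toLinearMap hs hkD, P.factor (plusMap s s' π hπ) hps hkP),
    ⟨hW, ?_, ?_, ?_⟩, ?_⟩
  · intro B _ _ x
    exact (hD' B x).symm
  · intro πp hπp B _ _ y
    have : πp = plusMap s s' π hπ := by
      ext y
      rw [hπp, plusMap_coe]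
    rw [this]
    exact (hP' B y).symm
  · rintro ⟨_, hCH⟩
    refine ⟨hW, ?_⟩
    intro y hy
    obtain ⟨x, hx, rfl⟩ := span_image π hs _ _
      (chGen_factor s P s' π hπ hps _ hP') y hy
    intro B _ _ b z
    obtain ⟨z, rfl⟩ := LinearMap.lTensor_surjective B (g := π.toLinearMap) hs z
    have h1 : b ⊗ₜ[A] π x = LinearMap.lTensor B π.toLinearMap (b ⊗ₜ[A] x) := by simp
    rw [h1, ← map_add]
    change (D.factor π.toLinearMap hs hkD).toFun B _ = (D.factor π.toLinearMap hs hkD).toFun B _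
    rw [hD', hD']
    exact hCH x hx B b z
  · rintro ⟨D1, P1⟩ ⟨_, h1, h3, _⟩
    refine Prod.ext ?_ ?_
    · apply PolyLaw.ext'
      intro B _ _ x
      obtain ⟨x, rfl⟩ := LinearMap.lTensor_surjective B (g := π.toLinearMap) hs x
      exact (h1 B x).symm.trans (hD' B x).symm
    · apply PolyLaw.ext'
      intro B _ _ x
      obtain ⟨x, rfl⟩ := LinearMap.lTensor_surjective B hps x
      exact (h3 (plusMap s s' π hπ) (plusMap_coe s s' π hπ) B x).symm.trans (hP' B x).symm
end
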